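/- Improved Lipschitz estimate near a plane (Theorem 4.2): for every p > 2, integer n ≥ 2 and r > 0 there exists a constant C > 0 (depending only on p, n and r) such that the following holds. Let ε ∈ (0,1) with ε < r, let ν ∈ ℝⁿ, b ∈ ℝ, δ > 0, and let F : Γ_ε → ℝ be continuous with |F(x) − ν·x − b| ≤ δ on Γ_ε. Let u be a bounded Borel function on Ω_ε satisfying the DPP at every point of Ω with u = F on Γ_ε. Then for every z₀ with B_{6r}(z₀) ⊂ Ω and all x, y ∈ B_r(z₀): |u(x) − u(y)| ≤ (|ν| + Cδ)|x − y| + (5|ν| + Cδ)ε. -/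

import Mathlib

open MeasureTheory Metric Set
open scoped RealInnerProductSpace

/-!
The dynamic programming principle has a maximum principle, and affine functions solve it. Comparison
with `⟪ν, x⟫ + b ± δ` therefore gives `u x - u z ≤ ‖ν‖ * ‖x - z‖ + 2 * δ`. To replace the term
`2 * δ` by a multiple of `δ * (‖x - z‖ + ε)`, we double the variables and compare `u x - u z` with a
concave profile of `‖x - z‖` plus a quadratic penalty on `x + z - c`, where `c / 2` is the point at
which we localise. For the noise, reflecting one of the two copies in the hyperplane orthogonal to
`x - z` turns the concavity of the profile into a strict gain. In the tug-of-war, a move of the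
opponent is either cancelled or answered by pulling the two points together, so that the loss comes
only from the penalty. It is proportional to `‖x + z - c‖ / ‖x - z‖`.

For the profile `H * √s` the gain dominates this loss, which gives a Hölder estimate. By the Hölder
estimate, `‖x + z - c‖` is at most a multiple of `‖x - z‖ ^ (1 / 4)` at a pair where the barrier is
violated. The loss is then dominated even by the gain of the profile `C * s - K * s ^ (5 / 4)`,
which has a finite slope at `0`.
-/

section Domain

lemma inter_frontier_nonempty_of_isPreconnected {X : Type*} [TopologicalSpace X] {s t : Set X}
    (hs : IsPreconnected s) (hst : (s ∩ t).Nonempty) (hstc : (s \ t).Nonempty) :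
    (s ∩ frontier t).Nonempty := by
  by_contra hempty
  have hcover : s ⊆ interior t ∪ (closure t)ᶜ := fun w hw ↦ by
    by_contra hw'
    rw [mem_union, not_or, notMem_compl_iff] at hw'
    exact hempty ⟨w, hw, hw'.2, hw'.1⟩
  obtain ⟨x, hxs, hxt⟩ := hst
  obtain ⟨y, hys, hyt⟩ := hstc
  obtain ⟨w, -, hwi, hwc⟩ := hs _ _ isOpen_interior isClosed_closure.isOpen_compl hcover
    ⟨x, hxs, (hcover hxs).resolve_right (not_not.2 (subset_closure hxt))⟩
    ⟨y, hys, (hcover hys).resolve_left fun h ↦ hyt (interior_subset h)⟩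
  exact hwc (subset_closure (interior_subset hwi))

/-- The outer boundary strip `Γ_ε` of `Ω`. -/
def outerStrip {X : Type*} [PseudoMetricSpace X] (Ω : Set X) (ε : ℝ) : Set X :=
  {y | y ∉ Ω ∧ infDist y (frontier Ω) ≤ ε}

/-- The domain `Ω_ε = Ω ∪ Γ_ε` on which functions satisfying the dynamic programming principle
are controlled. -/
def extendedDomain {X : Type*} [PseudoMetricSpace X] (Ω : Set X) (ε : ℝ) : Set X :=
  Ω ∪ outerStrip Ω ε

variable {E : Type*} [NormedAddCommGroup E] [NormedSpace ℝ E] {Ω : Set E} {ε : ℝ} {x : E}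

lemma ball_subset_extendedDomain (hx : x ∈ Ω) : ball x ε ⊆ extendedDomain Ω ε := by
  intro y hy
  by_cases hyΩ : y ∈ Ω
  · exact Or.inl hyΩ
  obtain ⟨w, hw, hwf⟩ := inter_frontier_nonempty_of_isPreconnected
    (convex_segment (𝕜 := ℝ) x y).isPreconnected ⟨x, left_mem_segment ℝ x y, hx⟩
    ⟨y, right_mem_segment ℝ x y, hyΩ⟩
  refine Or.inr ⟨hyΩ, ?_⟩
  calc infDist y (frontier Ω) ≤ dist y w := infDist_le_dist_of_mem hwf
    _ ≤ dist y x := by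
      rw [dist_comm y w, dist_comm y x, ← dist_add_dist_of_mem_segment hw]
      exact le_add_of_nonneg_left dist_nonneg
    _ ≤ ε := (mem_ball.1 hy).le

lemma isBounded_extendedDomain [Nontrivial E] (hne : Ω.Nonempty) (hb : Bornology.IsBounded Ω)
    (ε : ℝ) : Bornology.IsBounded (extendedDomain Ω ε) := by
  have hfrontier : (frontier Ω).Nonempty :=
    nonempty_frontier_iff.2 ⟨hne, fun h ↦ NormedSpace.unbounded_univ ℝ E (h ▸ hb)⟩
  have hthick : Bornology.IsBounded (thickening (ε + 1) (frontier Ω)) :=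
    (hb.closure.subset frontier_subset_closure).thickening
  refine hb.union (hthick.subset fun y hy ↦ mem_thickening_iff.2 ?_)
  exact (infDist_lt_iff hfrontier).1 (hy.2.trans_lt (lt_add_one ε))

end Domain

section Improvement

/-- If every upper bound `S ≥ 0` of `f` can be lowered by a fixed `η` at the points where `f` is
positive, then `f` is not positive: take for `S` the supremum. -/
lemma nonpos_of_forall_upperBound_improves {ι : Type*} {D : Set ι} {f : ι → ℝ} {η : ℝ}
    (hη : 0 < η) (hbdd : BddAbove (f '' D))
    (himp : ∀ S, 0 ≤ S → (∀ i ∈ D, f i ≤ S) → ∀ i ∈ D, 0 < f i → f i ≤ S - η) :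
    ∀ i ∈ D, f i ≤ 0 := by
  by_contra! ⟨j, hj, hfj⟩
  have hle : ∀ i ∈ D, f i ≤ sSup (f '' D) := fun i hi ↦ le_csSup hbdd (mem_image_of_mem f hi)
  have hpos : 0 < sSup (f '' D) := hfj.trans_le (hle j hj)
  obtain ⟨_, ⟨i, hi, rfl⟩, hfi⟩ := exists_lt_of_lt_csSup (Set.Nonempty.image f ⟨j, hj⟩)
    (max_lt hpos (sub_lt_self (sSup (f '' D)) hη))
  obtain ⟨hi_pos, hi_gt⟩ := max_lt_iff.1 hfi
  linarith [himp _ hpos.le hle i hi hi_pos]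

end Improvement

section Average

section Measure

variable {X : Type*} [MeasurableSpace X] {μ : Measure X} {s : Set X} {f g : X → ℝ}

lemma setAverage_mono (hs : MeasurableSet s) (hf : IntegrableOn f s μ) (hg : IntegrableOn g s μ)
    (hfg : ∀ x ∈ s, f x ≤ g x) : ⨍ x in s, f x ∂μ ≤ ⨍ x in s, g x ∂μ := by
  rw [setAverage_eq, setAverage_eq]
  exact smul_le_smul_of_nonneg_left (setIntegral_mono_on hf hg hs hfg) (by positivity)

lemma setAverage_sub (hf : IntegrableOn f s μ) (hg : IntegrableOn g s μ) :
    ⨍ x in s, (f x - g x) ∂μ = (⨍ x in s, f x ∂μ) - ⨍ x in s, g x ∂μ :=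
  integral_sub hf.to_average hg.to_average

lemma setAverage_le_of_even_part [InvolutiveNeg X] [MeasurableNeg X] [μ.IsNegInvariant]
    (hs : MeasurableSet s) (hneg : -s = s) (hf : IntegrableOn f s μ) (hg : IntegrableOn g s μ)
    (hfg : ∀ x ∈ s, f x + f (-x) ≤ 2 * g x) : ⨍ x in s, f x ∂μ ≤ ⨍ x in s, g x ∂μ := by
  have hmp : MeasurePreserving (Neg.neg : X → X) μ μ := Measure.measurePreserving_neg μ
  have hemb : MeasurableEmbedding (Neg.neg : X → X) := (MeasurableEquiv.neg X).measurableEmbedding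
  have hint_comp : ∫ x in s, f (-x) ∂μ = ∫ x in s, f x ∂μ := by
    simpa only [neg_preimage, hneg] using hmp.setIntegral_preimage_emb hemb f s
  have hf_comp : IntegrableOn (fun x ↦ f (-x)) s μ := by
    have := (hmp.integrableOn_comp_preimage hemb (s := s)).2 hf
    rwa [neg_preimage, hneg] at this
  have hint : ∫ x in s, (f x + f (-x)) ∂μ ≤ ∫ x in s, 2 * g x ∂μ :=
    setIntegral_mono_on (hf.add hf_comp) (hg.const_mul 2) hs hfg
  rw [integral_add hf hf_comp, hint_comp, integral_const_mul] at hint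
  rw [setAverage_eq, setAverage_eq]
  exact smul_le_smul_of_nonneg_left (by linarith) (by positivity)

end Measure

section Ball

lemma setAverage_ball_const {X : Type*} [PseudoMetricSpace X] [ProperSpace X] [MeasurableSpace X]
    {μ : Measure X} [IsFiniteMeasureOnCompacts μ] [μ.IsOpenPosMeasure] {ρ : ℝ} (hρ : 0 < ρ) (x : X)
    (c : ℝ) : ⨍ _y in ball x ρ, c ∂μ = c :=
  setAverage_const (measure_ball_pos μ x hρ).ne' measure_ball_lt_top.ne c

lemma integrableOn_ball_of_abs_le {X : Type*} [PseudoMetricSpace X] [ProperSpace X]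
    [MeasurableSpace X] [OpensMeasurableSpace X] {μ : Measure X} [IsFiniteMeasureOnCompacts μ]
    {f : X → ℝ} (hf : Measurable f) {x : X} {ρ K : ℝ} (hK : ∀ y ∈ ball x ρ, |f y| ≤ K) :
    IntegrableOn f (ball x ρ) μ :=
  Measure.integrableOn_of_bounded measure_ball_lt_top.ne hf.aestronglyMeasurable
    ((ae_restrict_mem measurableSet_ball).mono hK)

lemma integrableOn_ball_of_continuous {X : Type*} [MetricSpace X] [ProperSpace X]
    [MeasurableSpace X] [OpensMeasurableSpace X] {μ : Measure X} [IsFiniteMeasureOnCompacts μ]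
    {f : X → ℝ} (hf : Continuous f) (x : X) (ρ : ℝ) : IntegrableOn f (ball x ρ) μ :=
  (hf.continuousOn.integrableOn_compact (isCompact_closedBall x ρ)).mono_set ball_subset_closedBall

variable {E : Type*} [NormedAddCommGroup E] [MeasurableSpace E] [BorelSpace E] {μ : Measure E}
  [μ.IsAddHaarMeasure]

lemma setAverage_ball_eq_setAverage_ball_zero (f : E → ℝ) (x : E) (ρ : ℝ) :
    ⨍ y in ball x ρ, f y ∂μ = ⨍ h in ball 0 ρ, f (x + h) ∂μ := by
  have hpre : (x + ·) ⁻¹' ball x ρ = ball 0 ρ := by rw [preimage_add_ball, sub_self]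
  rw [setAverage_eq, setAverage_eq, Measure.addHaar_real_ball_center μ x, ← hpre,
    (measurePreserving_add_left μ x).setIntegral_preimage_emb (measurableEmbedding_addLeft x)]

variable [NormedSpace ℝ E] [FiniteDimensional ℝ E] {f : E → ℝ} {ρ ρ' : ℝ}

lemma setAverage_ball_sub_le_of_even_part {a b : E → ℝ} {ε T : ℝ} (hε : 0 < ε)
    (ha : IntegrableOn a (ball 0 ε) μ) (hb : IntegrableOn b (ball 0 ε) μ)
    (hab : ∀ h ∈ ball 0 ε, a h - b h + (a (-h) - b (-h)) ≤ 2 * T) :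
    (⨍ h in ball 0 ε, a h ∂μ) - ⨍ h in ball 0 ε, b h ∂μ ≤ T := by
  rw [← setAverage_sub ha hb]
  calc ⨍ h in ball 0 ε, (a h - b h) ∂μ ≤ ⨍ _h in ball (0 : E) ε, T ∂μ :=
        setAverage_le_of_even_part measurableSet_ball (by simp) (ha.sub hb)
          (integrableOn_const measure_ball_lt_top.ne) hab
    _ = T := setAverage_ball_const hε 0 T

lemma pow_mul_le_setAverage_of_ball_subset_ball {x y : E} {m : ℝ} (hρ : 0 < ρ) (hρ' : 0 < ρ')
    (hsub : ball y ρ' ⊆ ball x ρ) (hf : IntegrableOn f (ball x ρ) μ)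
    (hf0 : ∀ z ∈ ball x ρ, 0 ≤ f z) (hfm : ∀ z ∈ ball y ρ', m ≤ f z) :
    (ρ' / ρ) ^ Module.finrank ℝ E * m ≤ ⨍ z in ball x ρ, f z ∂μ := by
  have hind : IntegrableOn ((ball y ρ').indicator fun _ ↦ m) (ball x ρ) μ :=
    (integrableOn_const measure_ball_lt_top.ne).indicator measurableSet_ball
  have hvol : 0 < μ.real (ball (0 : E) 1) :=
    ENNReal.toReal_pos (measure_ball_pos μ _ one_pos).ne' measure_ball_lt_top.ne
  have hvol_ball {σ : ℝ} (hσ : 0 < σ) (z : E) :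
      μ.real (ball z σ) = σ ^ Module.finrank ℝ E * μ.real (ball (0 : E) 1) := by
    rw [Measure.real, Measure.addHaar_ball_of_pos μ z hσ, ENNReal.toReal_mul,
      ENNReal.toReal_ofReal (by positivity), Measure.real]
  calc (ρ' / ρ) ^ Module.finrank ℝ E * m
      = ⨍ z in ball x ρ, (ball y ρ').indicator (fun _ ↦ m) z ∂μ := by
        rw [setAverage_eq, setIntegral_indicator measurableSet_ball, inter_eq_right.2 hsub,
          setIntegral_const, smul_eq_mul, smul_eq_mul, hvol_ball hρ, hvol_ball hρ', div_pow]
        field_simp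
    _ ≤ ⨍ z in ball x ρ, f z ∂μ :=
        setAverage_mono measurableSet_ball hind hf fun z hz ↦
          indicator_apply_le' (hfm z) fun _ ↦ hf0 z hz

end Ball

section Reflection

variable {E : Type*} [NormedAddCommGroup E] [InnerProductSpace ℝ E]

lemma sub_reflection_orthogonal_singleton {e : E} (he : ‖e‖ = 1) (h : E) :
    h - (ℝ ∙ e)ᗮ.reflection h = (2 * ⟪e, h⟫) • e := by
  rw [Submodule.reflection_orthogonal_apply, Submodule.reflection_singleton_apply, he]
  simp [mul_smul, two_smul]

lemma sub_le_inner_of_mem_ball_smul {e h : E} {s ρ : ℝ} (he : ‖e‖ = 1)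
    (hh : h ∈ ball (s • e) ρ) : s - ρ ≤ ⟪e, h⟫ := by
  have hinner : ⟪e, h⟫ = s + ⟪e, h - s • e⟫ := by
    rw [inner_sub_right, inner_smul_right, real_inner_self_eq_norm_sq, he]
    ring
  have hle := (abs_le.1 (abs_real_inner_le_norm e (h - s • e))).1
  rw [he, one_mul] at hle
  linarith [mem_ball_iff_norm.1 hh]

lemma ball_smul_subset_ball_zero {e : E} {s σ ρ : ℝ} (he : ‖e‖ = 1) (hs : 0 ≤ s)
    (hρ : s + σ ≤ ρ) : ball (s • e) σ ⊆ ball 0 ρ :=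
  ball_subset_ball' (by rw [dist_zero_right, norm_smul, he, Real.norm_of_nonneg hs]; linarith)

variable [FiniteDimensional ℝ E] [MeasurableSpace E] [BorelSpace E] {a b : E → ℝ} {ε ρ : ℝ}

lemma integrableOn_ball_zero_comp_isometry (R : E ≃ₗᵢ[ℝ] E) (hb : IntegrableOn b (ball 0 ρ)) :
    IntegrableOn (b ∘ R) (ball 0 ρ) := by
  have hpre : R ⁻¹' ball 0 ρ = ball 0 ρ := by rw [R.preimage_ball, map_zero]
  rw [← hpre]
  exact (R.measurePreserving.integrableOn_comp_preimage R.toHomeomorph.measurableEmbedding).2 hb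

lemma setIntegral_ball_zero_comp_isometry (R : E ≃ₗᵢ[ℝ] E) (b : E → ℝ) (ρ : ℝ) :
    ∫ h in ball 0 ρ, (b ∘ R) h = ∫ h in ball 0 ρ, b h := by
  have hpre : R ⁻¹' ball 0 ρ = ball 0 ρ := by rw [R.preimage_ball, map_zero]
  conv_lhs => rw [← hpre]
  exact R.measurePreserving.setIntegral_preimage_emb R.toHomeomorph.measurableEmbedding b _

open scoped Classical in
lemma integrableOn_piecewise_comp_isometry (R : E ≃ₗᵢ[ℝ] E) (hρ : ρ ≤ ε)
    (hb : IntegrableOn b (ball 0 ε)) :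
    IntegrableOn ((ball 0 ρ).piecewise (b ∘ R) b) (ball 0 ε) := by
  have hR : IntegrableOn (b ∘ R) (ball 0 ρ) :=
    integrableOn_ball_zero_comp_isometry R (hb.mono_set (ball_subset_ball hρ))
  exact .piecewise measurableSet_ball hR.restrict hb.integrableOn

open scoped Classical in
lemma setAverage_piecewise_comp_isometry (R : E ≃ₗᵢ[ℝ] E) (hρ : ρ ≤ ε)
    (hb : IntegrableOn b (ball 0 ε)) :
    ⨍ h in ball 0 ε, (ball 0 ρ).piecewise (b ∘ R) b h = ⨍ h in ball 0 ε, b h := by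
  have hsub : ball (0 : E) ρ ⊆ ball 0 ε := ball_subset_ball hρ
  have hR : IntegrableOn (b ∘ R) (ball 0 ρ) :=
    integrableOn_ball_zero_comp_isometry R (hb.mono_set hsub)
  rw [setAverage_eq, setAverage_eq, integral_piecewise measurableSet_ball hR.restrict
    hb.integrableOn, ← integral_add_compl measurableSet_ball hb,
    Measure.restrict_restrict measurableSet_ball, inter_eq_left.2 hsub,
    setIntegral_ball_zero_comp_isometry]

/-- The gain in dimension `n` of a coupling that reflects the points at distance less than `ε / 2`
is `ε² ((1 / 8) ^ n / 16)` per unit of concavity. -/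
noncomputable def reflectionGain (E : Type*) [AddCommGroup E] [Module ℝ E] : ℝ :=
  (1 / 8) ^ Module.finrank ℝ E / 16

lemma reflectionGain_pos (E : Type*) [AddCommGroup E] [Module ℝ E] : 0 < reflectionGain E := by
  unfold reflectionGain
  positivity

lemma reflectionGain_mul_le_setAverage_sq_inner {e : E} {γ : ℝ} (hε : 0 < ε) (hγ : 0 ≤ γ)
    (he : ‖e‖ = 1) : γ * ε ^ 2 * reflectionGain E ≤
      ⨍ h in ball 0 ε, (ball 0 (ε / 2)).indicator (fun h ↦ 4 * γ * ⟪e, h⟫ ^ 2) h := by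
  have hsub : ball ((ε / 4) • e) (ε / 8) ⊆ ball 0 (ε / 2) :=
    ball_smul_subset_ball_zero he (by linarith) (by linarith)
  have hcap : ∀ h ∈ ball ((ε / 4) • e) (ε / 8), 4 * γ * (ε / 8) ^ 2 ≤
      (ball 0 (ε / 2)).indicator (fun h ↦ 4 * γ * ⟪e, h⟫ ^ 2) h := fun h hh ↦ by
    rw [indicator_of_mem (hsub hh)]
    have := sub_le_inner_of_mem_ball_smul he hh
    gcongr
    linarith
  have hint : IntegrableOn ((ball 0 (ε / 2)).indicator fun h ↦ 4 * γ * ⟪e, h⟫ ^ 2) (ball 0 ε) :=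
    (integrableOn_ball_of_continuous (by fun_prop) _ _).indicator measurableSet_ball
  have := pow_mul_le_setAverage_of_ball_subset_ball hε (by linarith)
    (hsub.trans (ball_subset_ball (by linarith))) hint
    (fun h _ ↦ indicator_nonneg (fun h _ ↦ by positivity) h) hcap
  rw [div_right_comm, div_self hε.ne'] at this
  rw [reflectionGain]
  linarith

/-- In the comparison of the averages of `a` and `b`, the points of the ball of radius `ε / 2` are
paired with their images under `R` and the other points are paired with themselves. -/
lemma setAverage_sub_le_of_reflection {T γ : ℝ} (hε : 0 < ε) (hγ : 0 ≤ γ) (R : E ≃ₗᵢ[ℝ] E)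
    {e : E} (he : ‖e‖ = 1) (ha : IntegrableOn a (ball 0 ε)) (hb : IntegrableOn b (ball 0 ε))
    (hab : ∀ h ∈ ball 0 ε, a h - b h + (a (-h) - b (-h)) ≤ 2 * T)
    (habR : ∀ h ∈ ball 0 (ε / 2), a h - b (R h) + (a (-h) - b (R (-h))) ≤
      2 * (T - 4 * γ * ⟪e, h⟫ ^ 2)) :
    (⨍ h in ball 0 ε, a h) - ⨍ h in ball 0 ε, b h ≤ T - γ * ε ^ 2 * reflectionGain E := by
  classical
  have hρ : ε / 2 ≤ ε := by linarith
  set bR : E → ℝ := (ball 0 (ε / 2)).piecewise (b ∘ R) b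
  set gain : E → ℝ := (ball 0 (ε / 2)).indicator fun h ↦ 4 * γ * ⟪e, h⟫ ^ 2
  have hgain : IntegrableOn gain (ball 0 ε) :=
    (integrableOn_ball_of_continuous (by fun_prop) _ _).indicator measurableSet_ball
  have hbR : IntegrableOn bR (ball 0 ε) := integrableOn_piecewise_comp_isometry R hρ hb
  have hT : IntegrableOn (fun _ ↦ T) (ball (0 : E) ε) := integrableOn_const measure_ball_lt_top.ne
  have heven : ∀ h ∈ ball 0 ε, (a h - bR h) + (a (-h) - bR (-h)) ≤ 2 * (T - gain h) := by
    intro h hh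
    by_cases hin : h ∈ ball 0 (ε / 2)
    · have hin' : -h ∈ ball 0 (ε / 2) := by simpa using hin
      simpa [bR, gain, hin, hin'] using habR h hin
    · have hin' : -h ∉ ball 0 (ε / 2) := by simpa using hin
      simpa [bR, gain, hin, hin'] using hab h hh
  calc (⨍ h in ball 0 ε, a h) - ⨍ h in ball 0 ε, b h
      = ⨍ h in ball 0 ε, (a h - bR h) := by
        rw [setAverage_sub ha hbR, setAverage_piecewise_comp_isometry R hρ hb]
    _ ≤ ⨍ h in ball 0 ε, (T - gain h) :=
        setAverage_le_of_even_part measurableSet_ball (by simp) (ha.sub hbR) (hT.sub hgain) heven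
    _ = T - ⨍ h in ball 0 ε, gain h := by
        rw [setAverage_sub hT hgain, setAverage_ball_const hε]
    _ ≤ T - γ * ε ^ 2 * reflectionGain E := by
        gcongr
        exact reflectionGain_mul_le_setAverage_sq_inner hε hγ he

end Reflection

end Average

section Cone

lemma norm_add_sq_le_of_norm_le {E : Type*} [NormedAddCommGroup E] {w : E} {t : ℝ}
    (hw : ‖w‖ ≤ 2 * t) (y : E) :
    ‖y + w‖ ^ 2 ≤ ‖y‖ ^ 2 + 4 * t * ‖y‖ + 4 * t ^ 2 := by
  have hle : ‖y + w‖ ≤ ‖y‖ + 2 * t := (norm_add_le y w).trans (by gcongr)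
  calc ‖y + w‖ ^ 2 ≤ (‖y‖ + 2 * t) ^ 2 := by gcongr
    _ = ‖y‖ ^ 2 + 4 * t * ‖y‖ + 4 * t ^ 2 := by ring

variable {E : Type*} [NormedAddCommGroup E] [InnerProductSpace ℝ E] {e w d y f g : E}
  {s t A μ : ℝ}

lemma inner_sq_le_norm_sq (he : ‖e‖ = 1) (w : E) : ⟪e, w⟫ ^ 2 ≤ ‖w‖ ^ 2 :=
  sq_le_sq.2 (by simpa [he] using abs_real_inner_le_norm e w)

lemma norm_smul_add_le (he : ‖e‖ = 1) (hs : 0 < s) (hw : 2 * ‖w‖ ≤ s) :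
    ‖s • e + w‖ ≤ s + ⟪e, w⟫ + (‖w‖ ^ 2 - ⟪e, w⟫ ^ 2) / s := by
  have hinner := abs_le.1 (abs_real_inner_le_norm e w)
  rw [he, one_mul] at hinner
  have hsq : ‖s • e + w‖ ^ 2 = (s + ⟪e, w⟫) ^ 2 + (‖w‖ ^ 2 - ⟪e, w⟫ ^ 2) := by
    rw [norm_add_sq_real, real_inner_smul_left, norm_smul, he, Real.norm_of_nonneg hs.le]
    ring
  have hq : 0 ≤ ‖w‖ ^ 2 - ⟪e, w⟫ ^ 2 := sub_nonneg.2 (inner_sq_le_norm_sq he w)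
  set q := ‖w‖ ^ 2 - ⟪e, w⟫ ^ 2
  have hqs : 0 ≤ q / s := by positivity
  refine le_of_sq_le_sq ?_ (by linarith)
  rw [hsq]
  nlinarith [mul_nonneg hqs (by linarith : 0 ≤ s + 2 * ⟪e, w⟫), div_mul_cancel₀ q hs.ne']

lemma norm_smul_add_le_of_norm_le (he : ‖e‖ = 1) (ht : 0 < t) (hts : 8 * t ≤ s)
    (hw : ‖w‖ ≤ 2 * t) :
    ‖s • e + w‖ ≤ s + 2 * t - (‖w‖ ^ 2 - ⟪e, w⟫ ^ 2) / (8 * t) := by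
  have hs : 0 < s := by linarith
  have hnorm := norm_smul_add_le he hs (w := w) (by linarith)
  have hw_sq : ‖w‖ ^ 2 ≤ 4 * t ^ 2 := by nlinarith [norm_nonneg w]
  have hq : 0 ≤ ‖w‖ ^ 2 - ⟪e, w⟫ ^ 2 := sub_nonneg.2 (inner_sq_le_norm_sq he w)
  have hq_le : ‖w‖ ^ 2 - ⟪e, w⟫ ^ 2 ≤ 4 * t ^ 2 := by nlinarith [sq_nonneg ⟪e, w⟫]
  set q := ‖w‖ ^ 2 - ⟪e, w⟫ ^ 2
  have hqs : q / s ≤ q / (8 * t) := div_le_div_of_nonneg_left hq (by positivity) hts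
  have hq_mul : q / (8 * t) * (8 * t) = q := div_mul_cancel₀ _ (by positivity)
  have hq_pos : 0 ≤ q / (8 * t) := by positivity
  have hinner : ⟪e, w⟫ ≤ 2 * t - 2 * (q / (8 * t)) := by
    refine le_of_sq_le_sq ?_ (by nlinarith)
    nlinarith
  linarith

/-- Change of `A * (‖a - b‖ - s) + μ * ‖a + b - c‖ ^ 2` when the points `a` and `b`, with
`a - b = s • e` and `a + b - c = y`, make the moves `f` and `g`. -/
noncomputable def coneBarrier (A μ s : ℝ) (e y f g : E) : ℝ :=
  A * (‖s • e + (f - g)‖ - s) + μ * ‖y + (f + g)‖ ^ 2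

lemma coneBarrier_pull (he : ‖e‖ = 1) (hts : 2 * t ≤ s) (A μ : ℝ) (y : E) :
    coneBarrier A μ s e y (-(t • e)) (t • e) = -(2 * t * A) + μ * ‖y‖ ^ 2 := by
  have hdiff : s • e + (-(t • e) - t • e) = (s - 2 * t) • e := by module
  rw [coneBarrier, hdiff, neg_add_cancel, add_zero, norm_smul, he,
    Real.norm_of_nonneg (by linarith)]
  ring

lemma coneBarrier_add_pull_le_of_lt (he : ‖e‖ = 1) (hs : 0 < s) (hts : 2 * t ≤ s)
    (hst : s < 8 * t) (hA : 0 ≤ A) (hμ : 0 ≤ μ) (hf : ‖f‖ ≤ t) (hg : ‖g‖ ≤ t) :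
    coneBarrier A μ s e y f g + coneBarrier A μ s e y (-(t • e)) (t • e) ≤
      2 * (μ * ‖y‖ ^ 2) + 2 * (μ * t ^ 2 * (32 * (‖y‖ / s) + 8)) := by
  have ht : 0 < t := by linarith
  have hdiff : ‖s • e + (f - g)‖ - s ≤ 2 * t := by
    have := norm_add_le (s • e) (f - g)
    rw [norm_smul, he, Real.norm_of_nonneg hs.le] at this
    linarith [norm_sub_le f g]
  have hsum := norm_add_sq_le_of_norm_le ((norm_add_le f g).trans (by linarith : _ ≤ 2 * t)) y
  have hty : t * ‖y‖ ≤ 8 * (t ^ 2 * (‖y‖ / s)) :=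
    calc t * ‖y‖ = t * (‖y‖ / s) * s := by field_simp
      _ ≤ t * (‖y‖ / s) * (8 * t) := by gcongr
      _ = _ := by ring
  rw [coneBarrier_pull he hts, coneBarrier]
  have : 0 ≤ μ * t ^ 2 := by positivity
  have : 0 ≤ μ * (t ^ 2 * (‖y‖ / s)) := by positivity
  linarith [mul_le_mul_of_nonneg_left hdiff hA, mul_le_mul_of_nonneg_left hsum hμ,
    mul_le_mul_of_nonneg_left hty hμ]

lemma coneBarrier_add_neg_le (he : ‖e‖ = 1) (hs : 0 < s) (hts : 8 * t ≤ s) (hA : 0 ≤ A)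
    (hμ : 0 ≤ μ) (hf : ‖f‖ ≤ t) (hg : ‖g‖ ≤ t)
    (hq : A * (‖f - g‖ ^ 2 - ⟪e, f - g⟫ ^ 2) ≤ 32 * μ * t ^ 2 * (‖y‖ + t)) :
    coneBarrier A μ s e y f g + coneBarrier A μ s e y (-f) (-g) ≤
      2 * (μ * ‖y‖ ^ 2) + 2 * (μ * t ^ 2 * (32 * (‖y‖ / s) + 8)) := by
  have hw : ‖f - g‖ ≤ 2 * t := (norm_sub_le f g).trans (by linarith)
  have hnorm := norm_smul_add_le he hs (w := f - g) (by linarith)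
  have hnorm_neg := norm_smul_add_le he hs (w := -(f - g)) (by rw [norm_neg]; linarith)
  rw [norm_neg, inner_neg_right, neg_sq] at hnorm_neg
  have hparallelogram : ‖y + (f + g)‖ ^ 2 + ‖y + (-f + -g)‖ ^ 2 ≤ 2 * ‖y‖ ^ 2 + 8 * t ^ 2 := by
    have hfg : ‖f + g‖ ≤ 2 * t := (norm_add_le f g).trans (by linarith)
    rw [← neg_add, ← sub_eq_add_neg]
    nlinarith [parallelogram_law_with_norm ℝ y (f + g), norm_nonneg (f + g)]
  have hdiff : ‖s • e + (f - g)‖ - s + (‖s • e + (-f - -g)‖ - s) ≤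
      2 * ((‖f - g‖ ^ 2 - ⟪e, f - g⟫ ^ 2) / s) := by
    rw [show -f - -g = -(f - g) by abel]
    linarith
  have hq_div : A * ((‖f - g‖ ^ 2 - ⟪e, f - g⟫ ^ 2) / s) ≤
      32 * μ * t ^ 2 * (‖y‖ / s) + 4 * (μ * t ^ 2) :=
    calc A * ((‖f - g‖ ^ 2 - ⟪e, f - g⟫ ^ 2) / s)
        ≤ 32 * μ * t ^ 2 * (‖y‖ + t) / s := by rw [← mul_div_assoc]; gcongr
      _ ≤ 32 * μ * t ^ 2 * (‖y‖ + s / 8) / s := by gcongr; linarith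
      _ = _ := by field_simp; ring
  rw [coneBarrier, coneBarrier]
  linarith [mul_le_mul_of_nonneg_left hdiff hA, mul_le_mul_of_nonneg_left hparallelogram hμ]

lemma coneBarrier_add_pull_le_of_transversal (he : ‖e‖ = 1) (ht : 0 < t) (hts : 8 * t ≤ s)
    (hA : 0 ≤ A) (hμ : 0 ≤ μ) (hf : ‖f‖ ≤ t) (hg : ‖g‖ ≤ t)
    (hq : 32 * μ * t ^ 2 * (‖y‖ + t) ≤ A * (‖f - g‖ ^ 2 - ⟪e, f - g⟫ ^ 2)) :
    coneBarrier A μ s e y f g + coneBarrier A μ s e y (-(t • e)) (t • e) ≤ 2 * (μ * ‖y‖ ^ 2) := by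
  have hw : ‖f - g‖ ≤ 2 * t := (norm_sub_le f g).trans (by linarith)
  have hdiff : ‖s • e + (f - g)‖ - s ≤
      2 * t - (‖f - g‖ ^ 2 - ⟪e, f - g⟫ ^ 2) / (8 * t) := by
    linarith [norm_smul_add_le_of_norm_le he ht hts hw]
  have hsum := norm_add_sq_le_of_norm_le ((norm_add_le f g).trans (by linarith : _ ≤ 2 * t)) y
  have hgain : 4 * μ * t * (‖y‖ + t) ≤ A * ((‖f - g‖ ^ 2 - ⟪e, f - g⟫ ^ 2) / (8 * t)) := by
    rw [← mul_div_assoc, le_div_iff₀ (by positivity)]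
    linarith
  rw [coneBarrier_pull he (by linarith), coneBarrier]
  linarith [mul_le_mul_of_nonneg_left hdiff hA, mul_le_mul_of_nonneg_left hsum hμ]

/-- Every pair of moves is answered either by cancelling it or by pulling the points together. The
pull wins if the move has a large component transversal to `e`, because such a move increases the
distance by less than `2 * t`. -/
lemma exists_coneBarrier_response (he : ‖e‖ = 1) (ht : 0 < t) (hts : 2 * t ≤ s) (hA : 0 ≤ A)
    (hμ : 0 ≤ μ) (hf : ‖f‖ ≤ t) (hg : ‖g‖ ≤ t) :
    ∃ f' ∈ closedBall (0 : E) t, ∃ g' ∈ closedBall (0 : E) t,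
      coneBarrier A μ s e y f g + coneBarrier A μ s e y f' g' ≤
        2 * (μ * ‖y‖ ^ 2) + 2 * (μ * t ^ 2 * (32 * (‖y‖ / s) + 8)) := by
  have hs : 0 < s := by linarith
  have hte : ‖t • e‖ ≤ t := by rw [norm_smul, he, Real.norm_of_nonneg ht.le, mul_one]
  have hpull : -(t • e) ∈ closedBall (0 : E) t ∧ t • e ∈ closedBall (0 : E) t := by
    simpa using hte
  rcases lt_or_ge s (8 * t) with hst | hst
  · exact ⟨_, hpull.1, _, hpull.2, coneBarrier_add_pull_le_of_lt he hs hts hst hA hμ hf hg⟩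
  rcases le_total (A * (‖f - g‖ ^ 2 - ⟪e, f - g⟫ ^ 2)) (32 * μ * t ^ 2 * (‖y‖ + t)) with hq | hq
  · exact ⟨-f, by simpa using hf, -g, by simpa using hg,
      coneBarrier_add_neg_le he hs hst hA hμ hf hg hq⟩
  · refine ⟨_, hpull.1, _, hpull.2,
      (coneBarrier_add_pull_le_of_transversal he ht hst hA hμ hf hg hq).trans ?_⟩
    have : 0 ≤ 2 * (μ * t ^ 2 * (32 * (‖y‖ / s) + 8)) := by positivity
    linarith

end Cone

section TugOfWar

lemma image_neg_fun {X : Type*} (u : X → ℝ) (s : Set X) : (-u) '' s = -(u '' s) := by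
  rw [← image_neg_eq_neg, image_image]
  rfl

/-- The tug-of-war part of the dynamic programming principle: the sum of the best and the worst
value of `u` in the ball of radius `t`. -/
noncomputable def tugSum {X : Type*} [PseudoMetricSpace X] (u : X → ℝ) (x : X) (t : ℝ) : ℝ :=
  sSup (u '' ball x t) + sInf (u '' ball x t)

lemma tugSum_neg {X : Type*} [PseudoMetricSpace X] (u : X → ℝ) (x : X) (t : ℝ) :
    tugSum (-u) x t = -tugSum u x t := by
  rw [tugSum, tugSum, image_neg_fun, Real.sSup_neg, Real.sInf_neg]
  ring

lemma tugSum_le_of_forall_reflection {X : Type*} [SeminormedAddCommGroup X] {u : X → ℝ} {x : X}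
    {t T : ℝ} (ht : 0 < t) (hu : Bornology.IsBounded (u '' ball x t))
    (hT : ∀ h ∈ ball (0 : X) t, u (x + h) + u (x - h) ≤ T) : tugSum u x t ≤ T := by
  refine le_sub_iff_add_le.1 (csSup_le ((nonempty_ball.2 ht).image u)
    (forall_mem_image.2 fun y hy ↦ ?_))
  have hh : y - x ∈ ball (0 : X) t := by simpa [dist_eq_norm] using hy
  have hinf : sInf (u '' ball x t) ≤ u (x - (y - x)) :=
    csInf_le hu.bddBelow (mem_image_of_mem u (by simpa using hh))
  have := hT _ hh
  rw [add_sub_cancel] at this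
  linarith

section PseudoMetricSpace

variable {X : Type*} [PseudoMetricSpace X] {u : X → ℝ} {x z : X} {t ε : ℝ}

lemma tugSum_sub_le_of_forall_le {T : ℝ} (ht : 0 < t) (hx : Bornology.IsBounded (u '' ball x t))
    (hz : Bornology.IsBounded (u '' ball z t))
    (hT : ∀ J, (∀ a ∈ ball x t, ∀ b ∈ ball z t, J ≤ u a - u b) →
      ∀ a ∈ ball x t, ∀ b ∈ ball z t, u a - u b + J ≤ T) :
    tugSum u x t - tugSum u z t ≤ T := by
  have hJ := hT (sInf (u '' ball x t) - sSup (u '' ball z t)) fun a ha b hb ↦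
    sub_le_sub (csInf_le hx.bddBelow (mem_image_of_mem u ha))
      (le_csSup hz.bddAbove (mem_image_of_mem u hb))
  have hsup : ∀ b ∈ ball z t,
      sSup (u '' ball x t) ≤ T - (sInf (u '' ball x t) - sSup (u '' ball z t)) + u b := fun b hb ↦
    csSup_le ((nonempty_ball.2 ht).image u)
      (forall_mem_image.2 fun a ha ↦ by linarith [hJ a ha b hb])
  have hinf : sSup (u '' ball x t) - (T - (sInf (u '' ball x t) - sSup (u '' ball z t))) ≤
      sInf (u '' ball z t) :=
    le_csInf ((nonempty_ball.2 ht).image u) (forall_mem_image.2 fun b hb ↦ by linarith [hsup b hb])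
  unfold tugSum
  linarith

lemma integrableOn_sSup_image_ball (hu : Bornology.IsBounded (u '' ball x ε)) :
    IntegrableOn (fun t ↦ sSup (u '' ball x t)) (Ioc 0 ε) := by
  obtain ⟨K, hK⟩ := isBounded_iff_forall_norm_le.1 hu
  have hKt : ∀ t ∈ Ioc 0 ε, ∀ y ∈ u '' ball x t, ‖y‖ ≤ K := fun t ht y hy ↦
    hK y (image_mono (ball_subset_ball ht.2) hy)
  have hbdd : ∀ t ∈ Ioc 0 ε, BddAbove (u '' ball x t) := fun t ht ↦
    ⟨K, fun y hy ↦ (le_abs_self y).trans (hKt t ht y hy)⟩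
  have hself : ∀ t ∈ Ioc 0 ε, u x ∈ u '' ball x t := fun t ht ↦
    mem_image_of_mem u (mem_ball_self ht.1)
  have hmono : MonotoneOn (fun t ↦ sSup (u '' ball x t)) (Ioc 0 ε) := fun t ht t' ht' htt' ↦
    csSup_le_csSup (hbdd t' ht') ⟨_, hself t ht⟩ (image_mono (ball_subset_ball htt'))
  refine IntegrableOn.of_bound measure_Ioc_lt_top
    (aemeasurable_restrict_of_monotoneOn measurableSet_Ioc hmono).aestronglyMeasurable K
    ((ae_restrict_mem measurableSet_Ioc).mono fun t ht ↦ abs_le.2 ⟨?_, ?_⟩)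
  · exact (abs_le.1 (hKt t ht _ (hself t ht))).1.trans (le_csSup (hbdd t ht) (hself t ht))
  · exact csSup_le ⟨_, hself t ht⟩ fun y hy ↦ (abs_le.1 (hKt t ht y hy)).2

lemma intervalIntegrable_tugSum (hε : 0 ≤ ε) (hu : Bornology.IsBounded (u '' ball x ε)) :
    IntervalIntegrable (tugSum u x) volume 0 ε := by
  rw [intervalIntegrable_iff, uIoc_of_le hε]
  have hinf : IntegrableOn (fun t ↦ sSup ((-u) '' ball x t)) (Ioc 0 ε) :=
    integrableOn_sSup_image_ball (by rw [image_neg_fun]; exact hu.neg)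
  simp only [image_neg_fun, Real.sSup_neg] at hinf
  exact (integrableOn_sSup_image_ball hu).add (by simpa using hinf.neg)

end PseudoMetricSpace

variable {E : Type*} [NormedAddCommGroup E] [NormedSpace ℝ E] {u : E → ℝ} {x z : E} {t T : ℝ}

/-- At a common point of the two balls the difference vanishes, so the worst difference is at most
zero. -/
lemma tugSum_sub_le_of_norm_sub_lt (ht : 0 < t) (hx : Bornology.IsBounded (u '' ball x t))
    (hz : Bornology.IsBounded (u '' ball z t)) (hxz : ‖x - z‖ < 2 * t)
    (hT : ∀ f ∈ ball (0 : E) t, ∀ g ∈ ball (0 : E) t, u (x + f) - u (z + g) ≤ T) :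
    tugSum u x t - tugSum u z t ≤ T := by
  have hmem_left : midpoint ℝ x z ∈ ball x t := by
    rw [mem_ball, dist_midpoint_left, dist_eq_norm, Real.norm_ofNat]
    linarith
  have hmem_right : midpoint ℝ x z ∈ ball z t := by
    rw [mem_ball, dist_midpoint_right, dist_eq_norm, Real.norm_ofNat]
    linarith
  refine tugSum_sub_le_of_forall_le ht hx hz fun J hJ a ha b hb ↦ ?_
  have := hT (a - x) (by simpa [dist_eq_norm] using ha) (b - z) (by simpa [dist_eq_norm] using hb)
  rw [add_sub_cancel, add_sub_cancel] at this
  linarith [hJ _ hmem_left _ hmem_right]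

lemma tugSum_sub_le_of_response {Φ : E → E → ℝ} (ht : 0 < t)
    (hx : Bornology.IsBounded (u '' ball x t)) (hz : Bornology.IsBounded (u '' ball z t))
    (hΦ : Continuous (Function.uncurry Φ))
    (hle : ∀ f ∈ ball (0 : E) t, ∀ g ∈ ball (0 : E) t, u (x + f) - u (z + g) ≤ Φ f g)
    (hresponse : ∀ f ∈ ball (0 : E) t, ∀ g ∈ ball (0 : E) t,
      ∃ f' ∈ closedBall (0 : E) t, ∃ g' ∈ closedBall (0 : E) t, Φ f g + Φ f' g' ≤ T) :
    tugSum u x t - tugSum u z t ≤ T := by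
  refine tugSum_sub_le_of_forall_le ht hx hz fun J hJ a ha b hb ↦ ?_
  have hJΦ : ∀ p ∈ closure (ball (0 : E) t ×ˢ ball (0 : E) t), J ≤ Function.uncurry Φ p :=
    le_on_closure (fun p hp ↦ (hJ (x + p.1) (by simpa using hp.1) (z + p.2)
      (by simpa using hp.2)).trans (hle p.1 hp.1 p.2 hp.2)) continuousOn_const hΦ.continuousOn
  rw [closure_prod_eq, closure_ball _ ht.ne'] at hJΦ
  have hf : a - x ∈ ball (0 : E) t := by simpa [dist_eq_norm] using ha
  have hg : b - z ∈ ball (0 : E) t := by simpa [dist_eq_norm] using hb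
  obtain ⟨f', hf', g', hg', hsum⟩ := hresponse _ hf _ hg
  have hab := hle _ hf _ hg
  rw [add_sub_cancel, add_sub_cancel] at hab
  have hJ_le : J ≤ Φ f' g' := hJΦ (f', g') ⟨hf', hg'⟩
  linarith

end TugOfWar

section DPP

lemma intervalIntegral_le_mul_of_forall_le {f : ℝ → ℝ} {a b T : ℝ} (hab : a ≤ b)
    (hf : IntervalIntegrable f volume a b) (hT : ∀ t ∈ Ioc a b, f t ≤ T) :
    ∫ t in a..b, f t ≤ (b - a) * T := by
  rw [← smul_eq_mul, ← intervalIntegral.integral_const]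
  exact intervalIntegral.integral_mono_on_of_le_Ioo hab hf intervalIntegrable_const
    fun t ht ↦ hT t (Ioo_subset_Ioc_self ht)

variable {E : Type*} [NormedAddCommGroup E] [InnerProductSpace ℝ E] [FiniteDimensional ℝ E]
  [MeasurableSpace E] [BorelSpace E] {Ω W : Set E} {ε α β δ : ℝ} {u g : E → ℝ} {x z : E}

/-- `u` is a bounded Borel solution in `Ω` of the dynamic programming principle with weight `α` for
the tug-of-war and weight `β` for the noise. Boundedness is only required on the extended domain. -/
structure IsDPPSolution (Ω : Set E) (ε α β : ℝ) (u : E → ℝ) : Prop where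
  measurable : Measurable u
  isBounded_image : Bornology.IsBounded (u '' extendedDomain Ω ε)
  eq : ∀ x ∈ Ω, u x = α / (2 * ε) * (∫ t in (0 : ℝ)..ε, tugSum u x t) + β * ⨍ z in ball x ε, u z

namespace IsDPPSolution

lemma neg (hu : IsDPPSolution Ω ε α β u) : IsDPPSolution Ω ε α β (-u) where
  measurable := hu.measurable.neg
  isBounded_image := by rw [image_neg_fun]; exact hu.isBounded_image.neg
  eq x hx := by
    simp only [tugSum_neg, Pi.neg_apply, hu.eq x hx, intervalIntegral.integral_neg]
    rw [average_neg]
    ring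

lemma isBounded_image_ball (hu : IsDPPSolution Ω ε α β u) (hx : x ∈ Ω) {t : ℝ} (ht : t ≤ ε) :
    Bornology.IsBounded (u '' ball x t) :=
  hu.isBounded_image.subset
    (image_mono ((ball_subset_ball ht).trans (ball_subset_extendedDomain hx)))

lemma integrableOn_ball (hu : IsDPPSolution Ω ε α β u) (hx : x ∈ Ω) :
    IntegrableOn u (ball x ε) := by
  obtain ⟨K, hK⟩ := isBounded_iff_forall_norm_le.1 (hu.isBounded_image_ball hx le_rfl)
  exact integrableOn_ball_of_abs_le hu.measurable fun y hy ↦ hK _ (mem_image_of_mem u hy)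

lemma integrableOn_ball_zero (hu : IsDPPSolution Ω ε α β u) (hx : x ∈ Ω) :
    IntegrableOn (fun h ↦ u (x + h)) (ball 0 ε) := by
  have hpre : (x + ·) ⁻¹' ball x ε = ball 0 ε := by rw [preimage_add_ball, sub_self]
  rw [← hpre]
  exact ((measurePreserving_add_left volume x).integrableOn_comp_preimage
    (measurableEmbedding_addLeft x)).2 (hu.integrableOn_ball hx)

lemma sub_le {T₁ T₂ T₃ : ℝ} (hu : IsDPPSolution Ω ε α β u) (hε : 0 < ε) (hα : 0 ≤ α) (hβ : 0 ≤ β)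
    (hx : x ∈ Ω) (hz : z ∈ Ω)
    (hT₁ : ∀ t ∈ Ioc 0 (ε / 2), tugSum u x t - tugSum u z t ≤ T₁)
    (hT₂ : ∀ t ∈ Ioc (ε / 2) ε, tugSum u x t - tugSum u z t ≤ T₂)
    (hT₃ : (⨍ h in ball 0 ε, u (x + h)) - ⨍ h in ball 0 ε, u (z + h) ≤ T₃) :
    u x - u z ≤ α * ((T₁ + T₂) / 4) + β * T₃ := by
  have hintx := intervalIntegrable_tugSum hε.le (hu.isBounded_image_ball hx le_rfl)
  have hintz := intervalIntegrable_tugSum hε.le (hu.isBounded_image_ball hz le_rfl)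
  have hint : IntervalIntegrable (fun t ↦ tugSum u x t - tugSum u z t) volume 0 ε :=
    hintx.sub hintz
  have hmid : ε / 2 ∈ uIcc 0 ε := by
    rw [uIcc_of_le hε.le]
    constructor <;> linarith
  have hint₁ := hint.mono_set (uIcc_subset_uIcc_left hmid)
  have hint₂ := hint.mono_set (uIcc_subset_uIcc_right hmid)
  have htug : ∫ t in (0 : ℝ)..ε, (tugSum u x t - tugSum u z t) ≤ ε * ((T₁ + T₂) / 2) :=
    calc ∫ t in (0 : ℝ)..ε, (tugSum u x t - tugSum u z t)
        = (∫ t in (0 : ℝ)..(ε / 2), (tugSum u x t - tugSum u z t)) +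
            ∫ t in (ε / 2)..ε, (tugSum u x t - tugSum u z t) :=
          (intervalIntegral.integral_add_adjacent_intervals hint₁ hint₂).symm
      _ ≤ (ε / 2 - 0) * T₁ + (ε - ε / 2) * T₂ :=
          add_le_add (intervalIntegral_le_mul_of_forall_le (by linarith) hint₁ hT₁)
            (intervalIntegral_le_mul_of_forall_le (by linarith) hint₂ hT₂)
      _ = ε * ((T₁ + T₂) / 2) := by ring
  rw [intervalIntegral.integral_sub hintx hintz] at htug
  calc u x - u z
      = α / (2 * ε) * ((∫ t in (0 : ℝ)..ε, tugSum u x t) - ∫ t in (0 : ℝ)..ε, tugSum u z t) +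
          β * ((⨍ h in ball 0 ε, u (x + h)) - ⨍ h in ball 0 ε, u (z + h)) := by
        rw [hu.eq x hx, hu.eq z hz, setAverage_ball_eq_setAverage_ball_zero u x,
          setAverage_ball_eq_setAverage_ball_zero u z]
        ring
    _ ≤ α / (2 * ε) * (ε * ((T₁ + T₂) / 2)) + β * T₃ := by gcongr
    _ = α * ((T₁ + T₂) / 4) + β * T₃ := by field_simp; ring

end IsDPPSolution

section MaximumPrinciple

lemma exists_two_le_mul_exp {c d : ℝ} (hc : 0 < c) (hd : 0 < d) :
    ∃ k, 0 ≤ k ∧ 2 ≤ c * Real.exp (k * d) := by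
  refine ⟨2 / c / d, by positivity, ?_⟩
  rw [div_mul_cancel₀ _ hd.ne', ← div_le_iff₀' hc]
  linarith [Real.add_one_le_exp (2 / c)]

/-- An exponential `exp (k * ⟪e, ·⟫)` grows so fast for large `k` that the noise alone doubles
it. -/
lemma exists_two_mul_le_setAverage [Nontrivial E] (hβ : 0 < β) (hε : 0 < ε)
    (hW : Bornology.IsBounded W) :
    ∃ (v : E → ℝ) (m : ℝ), 0 < m ∧ Continuous v ∧ (∀ y ∈ W, m ≤ v y ∧ v y ≤ 1) ∧
      ∀ x, 2 * v x ≤ β * ⨍ y in ball x ε, v y := by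
  obtain ⟨e, he⟩ := exists_norm_eq E zero_le_one
  obtain ⟨R, hR⟩ := hW.exists_norm_le
  have hinner : ∀ y ∈ W, |⟪e, y⟫| ≤ R := fun y hy ↦
    (abs_real_inner_le_norm e y).trans (by rw [he, one_mul]; exact hR y hy)
  set n := Module.finrank ℝ E
  obtain ⟨k, hk, hexp⟩ := exists_two_le_mul_exp (by positivity : 0 < β * (1 / 4) ^ n)
    (by positivity : 0 < ε / 4)
  rw [mul_assoc] at hexp
  refine ⟨fun y ↦ Real.exp (k * (⟪e, y⟫ - R)), Real.exp (k * (-R - R)), Real.exp_pos _,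
    by fun_prop, fun y hy ↦ ?_, fun x ↦ ?_⟩
  · have hy' := abs_le.1 (hinner y hy)
    refine ⟨Real.exp_le_exp.2 (by gcongr; exact hy'.1), Real.exp_le_one_iff.2 ?_⟩
    exact mul_nonpos_of_nonneg_of_nonpos hk (by linarith [hy'.2])
  have hcap : ∀ h ∈ ball ((ε / 2) • e) (ε / 4),
      Real.exp (k * (ε / 4)) * Real.exp (k * (⟪e, x⟫ - R)) ≤
        Real.exp (k * (⟪e, x + h⟫ - R)) := fun h hh ↦ by
    rw [← Real.exp_add, ← mul_add, inner_add_right]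
    have := sub_le_inner_of_mem_ball_smul he hh
    gcongr
    linarith
  have hle := pow_mul_le_setAverage_of_ball_subset_ball hε (by linarith)
    (ball_smul_subset_ball_zero he (by linarith) (by linarith))
    (integrableOn_ball_of_continuous (μ := volume) (by fun_prop) _ _)
    (fun h _ ↦ (Real.exp_pos _).le) hcap
  rw [div_right_comm, div_self hε.ne'] at hle
  rw [setAverage_ball_eq_setAverage_ball_zero]
  calc 2 * Real.exp (k * (⟪e, x⟫ - R))
      ≤ β * ((1 / 4) ^ n * Real.exp (k * (ε / 4))) * Real.exp (k * (⟪e, x⟫ - R)) := by gcongr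
    _ = β * ((1 / 4) ^ n * (Real.exp (k * (ε / 4)) * Real.exp (k * (⟪e, x⟫ - R)))) := by ring
    _ ≤ _ := by gcongr

lemma le_of_forall_le_sup_add_setAverage [Nontrivial E] (hα : 0 ≤ α) (hβ : 0 < β)
    (hαβ : α + β = 1) (hε : 0 < ε) (hW : Bornology.IsBounded W)
    (hball : ∀ x ∈ Ω, ball x ε ⊆ W) (hgm : Measurable g) (hgb : Bornology.IsBounded (g '' W))
    (hg : ∀ x ∈ Ω, ∀ K, (∀ y ∈ W, g y ≤ K) → g x ≤ α * K + β * ⨍ y in ball x ε, g y)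
    (hδ : ∀ y ∈ W \ Ω, g y ≤ δ) : ∀ y ∈ W, g y ≤ δ := by
  by_contra! ⟨w, hw, hgw⟩
  obtain ⟨v, m, hm, hv, hv_bound, hv_average⟩ := exists_two_mul_le_setAverage hβ hε hW
  set K := sSup (g '' W)
  have hgK : ∀ y ∈ W, g y ≤ K := fun y hy ↦ le_csSup hgb.bddAbove (mem_image_of_mem g hy)
  have hτ : 0 < K - δ := sub_pos.2 (hgw.trans_le (hgK w hw))
  have hgap : ∀ y ∈ W, (K - δ) * v y - (K - g y) ≤ 0 := by
    refine nonpos_of_forall_upperBound_improves (mul_pos hτ hm)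
      ⟨K - δ, forall_mem_image.2 fun y hy ↦ ?_⟩ fun S hS hfS x hx hpos ↦ ?_
    · nlinarith [hgK y hy, (hv_bound y hy).2]
    have hxΩ : x ∈ Ω := by
      by_contra hxΩ
      nlinarith [hδ x ⟨hx, hxΩ⟩, (hv_bound x hx).2]
    have hv_int : IntegrableOn (fun y ↦ (K - δ) * v y) (ball x ε) :=
      integrableOn_ball_of_continuous (by fun_prop) _ _
    have hconst : IntegrableOn (fun _ ↦ S + K) (ball x ε) :=
      integrableOn_const measure_ball_lt_top.ne
    obtain ⟨M, hM⟩ := isBounded_iff_forall_norm_le.1 hgb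
    have hg_int : IntegrableOn g (ball x ε) :=
      integrableOn_ball_of_abs_le hgm fun y hy ↦ hM _ (mem_image_of_mem g (hball x hxΩ hy))
    have haverage : ⨍ y in ball x ε, g y ≤ S + K - (K - δ) * ⨍ y in ball x ε, v y :=
      calc ⨍ y in ball x ε, g y ≤ ⨍ y in ball x ε, (S + K - (K - δ) * v y) :=
            setAverage_mono measurableSet_ball hg_int (hconst.sub hv_int) fun y hy ↦ by
              linarith [hfS y (hball x hxΩ hy)]
        _ = _ := by
            rw [setAverage_sub hconst hv_int, setAverage_ball_const hε, average, average,
              integral_const_mul]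
    have hgx := hg x hxΩ K hgK
    have hnoise := mul_le_mul_of_nonneg_left haverage hβ.le
    have hαK : α * K = K - β * K := by linear_combination K * hαβ
    linarith [mul_le_mul_of_nonneg_left (hv_average x) hτ.le,
      mul_le_mul_of_nonneg_left (hv_bound x hx).1 hτ.le,
      mul_le_of_le_one_left hS (by linarith : β ≤ 1)]
  have hK : K ≤ K - (K - δ) * m := csSup_le ⟨_, mem_image_of_mem g hw⟩
    (forall_mem_image.2 fun y hy ↦ by nlinarith [hgap y hy, (hv_bound y hy).1])
  linarith [mul_pos hτ hm]

namespace IsDPPSolution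

variable {ν : E} {b : ℝ}

lemma sub_affine_le_sup_add_setAverage {K : ℝ} (hu : IsDPPSolution Ω ε α β u) (hα : 0 ≤ α)
    (hβ : 0 ≤ β) (hαβ : α + β = 1) (hε : 0 < ε) (hx : x ∈ Ω)
    (hK : ∀ y ∈ extendedDomain Ω ε, u y - (⟪ν, y⟫ + b) ≤ K) :
    u x - (⟪ν, x⟫ + b) ≤ α * K + β * ⨍ y in ball x ε, (u y - (⟪ν, y⟫ + b)) := by
  have htug : ∀ t ∈ Ioc 0 ε, tugSum u x t ≤ 2 * (⟪ν, x⟫ + b + K) := fun t ht ↦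
    tugSum_le_of_forall_reflection ht.1 (hu.isBounded_image_ball hx ht.2) fun h hh ↦ by
      have hball : ∀ f ∈ ball (0 : E) t, x + f ∈ extendedDomain Ω ε := fun f hf ↦
        ball_subset_extendedDomain hx (ball_subset_ball ht.2 (by simpa using hf))
      have hadd := hK _ (hball h hh)
      have hsub := hK _ (hball (-h) (by simpa using hh))
      rw [inner_add_right] at hadd
      rw [← sub_eq_add_neg, inner_sub_right] at hsub
      linarith
  have hintegral := intervalIntegral_le_mul_of_forall_le hε.le
    (intervalIntegrable_tugSum hε.le (hu.isBounded_image_ball hx le_rfl)) htug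
  have hint_affine : IntegrableOn (fun h ↦ ⟪ν, x + h⟫ + b) (ball 0 ε) :=
    integrableOn_ball_of_continuous (by fun_prop) _ _
  have haverage : (⨍ h in ball 0 ε, u (x + h)) -
      ⨍ h in ball 0 ε, (u (x + h) - (⟪ν, x + h⟫ + b)) ≤ ⟪ν, x⟫ + b :=
    setAverage_ball_sub_le_of_even_part hε (hu.integrableOn_ball_zero hx)
      ((hu.integrableOn_ball_zero hx).sub hint_affine) fun h _ ↦ by
        simp only [inner_add_right, inner_neg_right]
        linarith
  rw [hu.eq x hx, setAverage_ball_eq_setAverage_ball_zero u,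
    setAverage_ball_eq_setAverage_ball_zero fun y ↦ u y - (⟪ν, y⟫ + b)]
  set A := ⨍ h in ball 0 ε, (u (x + h) - (⟪ν, x + h⟫ + b))
  calc α / (2 * ε) * (∫ t in (0 : ℝ)..ε, tugSum u x t) + β * (⨍ h in ball 0 ε, u (x + h)) -
        (⟪ν, x⟫ + b)
      ≤ α / (2 * ε) * ((ε - 0) * (2 * (⟪ν, x⟫ + b + K))) + β * (⟪ν, x⟫ + b + A) -
        (⟪ν, x⟫ + b) := by gcongr; linarith
    _ = α * (⟪ν, x⟫ + b + K) + β * (⟪ν, x⟫ + b + A) - (⟪ν, x⟫ + b) := by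
        field_simp
        ring
    _ = α * K + β * A := by linear_combination (⟪ν, x⟫ + b) * hαβ

lemma sub_affine_le [Nontrivial E] (hu : IsDPPSolution Ω ε α β u) (hα : 0 ≤ α) (hβ : 0 < β)
    (hαβ : α + β = 1) (hε : 0 < ε) (hΩ : Bornology.IsBounded Ω)
    (hδ : ∀ y ∈ outerStrip Ω ε, u y - (⟪ν, y⟫ + b) ≤ δ) :
    ∀ y ∈ extendedDomain Ω ε, u y - (⟪ν, y⟫ + b) ≤ δ := by
  rcases Ω.eq_empty_or_nonempty with rfl | hne
  · exact fun y hy ↦ hδ y (hy.resolve_left (notMem_empty y))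
  have hW := isBounded_extendedDomain hne hΩ ε
  refine le_of_forall_le_sup_add_setAverage (g := fun y ↦ u y - (⟪ν, y⟫ + b)) hα hβ hαβ hε hW
    (fun x hx ↦ ball_subset_extendedDomain hx) (hu.measurable.sub (by fun_prop)) ?_
    (fun x hx K hK ↦ hu.sub_affine_le_sup_add_setAverage hα hβ.le hαβ hε hx hK)
    fun y hy ↦ hδ y (hy.1.resolve_left hy.2)
  obtain ⟨K, hK⟩ := isBounded_iff_forall_norm_le.1 hu.isBounded_image
  obtain ⟨R, hR⟩ := hW.exists_norm_le
  refine isBounded_iff_forall_norm_le.2 ⟨K + (‖ν‖ * R + ‖b‖), forall_mem_image.2 fun y hy ↦ ?_⟩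
  calc ‖u y - (⟪ν, y⟫ + b)‖ ≤ ‖u y‖ + (‖⟪ν, y⟫‖ + ‖b‖) :=
        (norm_sub_le _ _).trans (by gcongr; exact norm_add_le _ _)
    _ ≤ K + (‖ν‖ * R + ‖b‖) := by
        gcongr
        · exact hK _ (mem_image_of_mem u hy)
        · exact (norm_inner_le_norm ν y).trans (by gcongr; exact hR y hy)

lemma sub_le_norm_mul_norm_sub [Nontrivial E] (hu : IsDPPSolution Ω ε α β u) (hα : 0 ≤ α)
    (hβ : 0 < β) (hαβ : α + β = 1) (hε : 0 < ε) (hΩ : Bornology.IsBounded Ω)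
    (hδ : ∀ y ∈ outerStrip Ω ε, |u y - ⟪ν, y⟫ - b| ≤ δ) (hx : x ∈ extendedDomain Ω ε)
    (hz : z ∈ extendedDomain Ω ε) : u x - u z ≤ ‖ν‖ * ‖x - z‖ + 2 * δ := by
  have hupper := hu.sub_affine_le (ν := ν) (b := b) (δ := δ) hα hβ hαβ hε hΩ
    (fun y hy ↦ by linarith [(abs_le.1 (hδ y hy)).2]) x hx
  have hlower := hu.neg.sub_affine_le (ν := -ν) (b := -b) (δ := δ) hα hβ hαβ hε hΩ
    (fun y hy ↦ by
      rw [Pi.neg_apply, inner_neg_left]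
      linarith [(abs_le.1 (hδ y hy)).1]) z hz
  rw [Pi.neg_apply, inner_neg_left] at hlower
  have hinner := real_inner_le_norm ν (x - z)
  rw [inner_sub_right] at hinner
  linarith

end IsDPPSolution

end MaximumPrinciple

end DPP

section Comparison

/-- A nonnegative concave profile `φ` on `(0, r)` with slope `m` and quantitative curvature `κ`,
growing by at most `B` on intervals of length `2 * ε`. -/
structure IsConcaveProfile (r ε B : ℝ) (φ m κ : ℝ → ℝ) : Prop where
  nonneg : ∀ s ∈ Ico 0 r, 0 ≤ φ s
  slope_nonneg : ∀ s ∈ Ioo 0 r, 0 ≤ m s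
  curvature_nonneg : ∀ s ∈ Ioo 0 r, 0 ≤ κ s
  le_tangent : ∀ s ∈ Ioo 0 r, ∀ y, 0 ≤ y → φ y ≤ φ s + m s * (y - s)
  le_parabola : ∀ s ∈ Ioo 0 r, ∀ y ∈ Icc 0 (2 * s), φ y ≤ φ s + m s * (y - s) - κ s * (y - s) ^ 2
  increment_le : ∀ s ∈ Ioo 0 r, ∀ y ∈ Icc s (s + 2 * ε), φ y ≤ φ s + B

namespace IsConcaveProfile

variable {r ε B : ℝ} {φ m κ : ℝ → ℝ}

lemma increment_nonneg (hφ : IsConcaveProfile r ε B φ m κ) (hε : 0 ≤ ε) (hr : 0 < r) : 0 ≤ B := by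
  have hmem : r / 2 ∈ Ioo 0 r := ⟨by linarith, by linarith⟩
  linarith [hφ.increment_le _ hmem (r / 2) ⟨le_rfl, by linarith⟩]

lemma le_add_increment {s y : ℝ} (hφ : IsConcaveProfile r ε B φ m κ) (hε : 0 ≤ ε)
    (hs : s ∈ Ioo 0 r) (hy : y ∈ Icc 0 (s + 2 * ε)) : φ y ≤ φ s + B := by
  rcases le_total s y with hsy | hys
  · exact hφ.increment_le s hs y ⟨hsy, hy.2⟩
  · have hslope := mul_nonpos_of_nonneg_of_nonpos (hφ.slope_nonneg s hs) (sub_nonpos.2 hys)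
    linarith [hφ.le_tangent s hs y hy.1, hφ.increment_nonneg hε (hs.1.trans hs.2)]

lemma affine_add_smul {N δ : ℝ} (hφ : IsConcaveProfile r ε B φ m κ) (hN : 0 ≤ N) (hδ : 0 ≤ δ) :
    IsConcaveProfile r ε (2 * N * ε + δ * B) (fun s ↦ N * s + δ * φ s) (fun s ↦ N + δ * m s)
      fun s ↦ δ * κ s where
  nonneg s hs := add_nonneg (mul_nonneg hN hs.1) (mul_nonneg hδ (hφ.nonneg s hs))
  slope_nonneg s hs := add_nonneg hN (mul_nonneg hδ (hφ.slope_nonneg s hs))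
  curvature_nonneg s hs := mul_nonneg hδ (hφ.curvature_nonneg s hs)
  le_tangent s hs y hy := by linarith [mul_le_mul_of_nonneg_left (hφ.le_tangent s hs y hy) hδ]
  le_parabola s hs y hy := by linarith [mul_le_mul_of_nonneg_left (hφ.le_parabola s hs y hy) hδ]
  increment_le s hs y hy := by
    linarith [mul_le_mul_of_nonneg_left (hφ.increment_le s hs y hy) hδ,
      mul_le_mul_of_nonneg_left hy.2 hN]

end IsConcaveProfile

lemma sq_mul_div_add_le {s t X : ℝ} (ht : 0 ≤ t) (hs : 0 < s) (hts : 2 * t ≤ s) (hX : 0 ≤ X) :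
    t ^ 2 * (32 * (X / s) + 8) ≤ 8 * t * (2 * X + t) := by
  have hratio : t / s ≤ 1 / 2 := (div_le_div_iff₀ hs two_pos).2 (by linarith)
  calc t ^ 2 * (32 * (X / s) + 8) = t * (32 * X * (t / s) + 8 * t) := by ring
    _ ≤ t * (32 * X * (1 / 2) + 8 * t) := by gcongr
    _ = 8 * t * (2 * X + t) := by ring

/-- The comparison function of the doubling of variables argument. -/
def pairBarrier {E : Type*} [NormedAddCommGroup E] (φ : ℝ → ℝ) (μ L : ℝ) (c x z : E) : ℝ :=
  φ ‖x - z‖ + μ * ‖x + z - c‖ ^ 2 + L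

lemma pairBarrier_nonneg {E : Type*} [NormedAddCommGroup E] {φ : ℝ → ℝ} {μ L : ℝ} {c x z : E}
    (hμ : 0 ≤ μ) (hL : 0 ≤ L) (hφ : 0 ≤ φ ‖x - z‖) : 0 ≤ pairBarrier φ μ L c x z := by
  unfold pairBarrier
  positivity

/-- Near the pair `(x, z)`, up to distance `ε`, the differences of `u` are bounded by `φ` of the
distance plus a quadratic penalty, with offset `w`, on the sum of the displacements. -/
def IsDominatedNear {E : Type*} [NormedAddCommGroup E] (ε : ℝ) (u : E → ℝ) (φ : ℝ → ℝ) (μ Q : ℝ)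
    (w x z : E) : Prop :=
  ∀ f ∈ ball (0 : E) ε, ∀ g ∈ ball (0 : E) ε,
    u (x + f) - u (z + g) ≤ φ ‖x - z + (f - g)‖ + μ * ‖w + (f + g)‖ ^ 2 + Q

variable {E : Type*} [NormedAddCommGroup E] {Ω : Set E}
  {ε α β r B μ Q t : ℝ} {u : E → ℝ} {φ m κ : ℝ → ℝ} {w x z : E}

lemma sub_le_pairBarrier_of_norm_sub_le {W : Set E} {c a b : E} {L S : ℝ} (hμ : 0 ≤ μ) (hL : 0 ≤ L)
    (hS : 0 ≤ S) (hr : 0 < r) (hφ : ∀ s ∈ Ico 0 r, 0 ≤ φ s)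
    (hmid : ∀ a ∈ W, ∀ b ∈ W, ‖a - b‖ < r → u a - u b ≤ φ ‖a - b‖ + μ * r ^ 2)
    (hfar : ∀ a ∈ W, ∀ b ∈ W, r ≤ ‖a - b‖ → ‖a - b‖ ≤ 3 * r → u a - u b ≤ φ ‖a - b‖)
    (hnear : ∀ a b, ‖a + b - c‖ < r → ‖a - b‖ ∈ Ioo 0 r →
      u a - u b ≤ pairBarrier φ μ L c a b + S)
    (ha : a ∈ W) (hb : b ∈ W) (hab : ‖a - b‖ ≤ 3 * r) :
    u a - u b ≤ pairBarrier φ μ L c a b + S := by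
  have hpenalty : 0 ≤ μ * ‖a + b - c‖ ^ 2 := by positivity
  rcases eq_or_ne a b with rfl | hne
  · have := pairBarrier_nonneg (c := c) (x := a) (z := a) hμ hL
      (hφ ‖a - a‖ (by simpa using hr))
    linarith
  rcases le_or_gt r ‖a - b‖ with hrs | hsr
  · have := hfar a ha b hb hrs hab
    unfold pairBarrier
    linarith
  rcases le_or_gt r ‖a + b - c‖ with hrX | hXr
  · have hle : μ * r ^ 2 ≤ μ * ‖a + b - c‖ ^ 2 := by gcongr
    have := hmid a ha b hb hsr
    unfold pairBarrier
    linarith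
  · exact hnear a b hXr ⟨norm_pos_iff.2 (sub_ne_zero.2 hne), hsr⟩

variable [InnerProductSpace ℝ E]

lemma mem_ball_half_smul {c : E} (hsum : ‖x + z - c‖ < r) (hsub : ‖x - z‖ < r) :
    x ∈ ball ((1 / 2 : ℝ) • c) r := by
  have hx : x - (1 / 2 : ℝ) • c = (1 / 2 : ℝ) • ((x + z - c) + (x - z)) := by module
  rw [mem_ball, dist_eq_norm, hx, norm_smul, Real.norm_of_nonneg (by norm_num)]
  linarith [norm_add_le (x + z - c) (x - z)]

lemma isDominatedNear_of_forall_sub_le_pairBarrier {c : E} {L S : ℝ} (hεr : ε ≤ r)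
    (hx : x ∈ Ω) (hz : z ∈ Ω) (hxz : ‖x - z‖ ≤ r)
    (hS : ∀ a ∈ extendedDomain Ω ε, ∀ b ∈ extendedDomain Ω ε, ‖a - b‖ ≤ 3 * r →
      u a - u b ≤ pairBarrier φ μ L c a b + S) :
    IsDominatedNear ε u φ μ (L + S) (x + z - c) x z := by
  intro f hf g hg
  have hdiff : x + f - (z + g) = x - z + (f - g) := by abel
  have hsum : x + f + (z + g) - c = x + z - c + (f + g) := by abel
  have hle := hS (x + f) (ball_subset_extendedDomain hx (by simpa using hf)) (z + g)
    (ball_subset_extendedDomain hz (by simpa using hg)) (by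
      rw [hdiff]
      linarith [norm_add_le (x - z) (f - g), norm_sub_le f g, mem_ball_zero_iff.1 hf,
        mem_ball_zero_iff.1 hg])
  rw [pairBarrier, hdiff, hsum] at hle
  linarith

namespace IsDominatedNear

lemma add_neg_le {f g : E} (h : IsDominatedNear ε u φ μ Q w x z) (hμ : 0 ≤ μ)
    (hf : f ∈ ball 0 ε) (hg : g ∈ ball 0 ε) :
    u (x + f) - u (z + g) + (u (x + -f) - u (z + -g)) ≤
      φ ‖x - z + (f - g)‖ + φ ‖x - z - (f - g)‖ + 2 * (μ * ‖w‖ ^ 2 + Q + 4 * (μ * ε ^ 2)) := by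
  have hpos := h f hf g hg
  have hneg := h (-f) (by simpa using hf) (-g) (by simpa using hg)
  rw [neg_sub_neg, ← neg_sub f g, ← neg_add, ← sub_eq_add_neg (x - z), ← sub_eq_add_neg w] at hneg
  have hparallelogram := parallelogram_law_with_norm ℝ w (f + g)
  have hfg : ‖f + g‖ ≤ 2 * ε := by
    linarith [norm_add_le f g, mem_ball_zero_iff.1 hf, mem_ball_zero_iff.1 hg]
  have hsq : ‖f + g‖ ^ 2 ≤ (2 * ε) ^ 2 := by gcongr
  have hpenalty : ‖w + (f + g)‖ ^ 2 + ‖w - (f + g)‖ ^ 2 ≤ 2 * ‖w‖ ^ 2 + 8 * ε ^ 2 := by linarith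
  linarith [mul_le_mul_of_nonneg_left hpenalty hμ]

lemma tugSum_sub_le_of_two_mul_le {s A : ℝ} (h : IsDominatedNear ε u φ μ Q w x z) (hμ : 0 ≤ μ)
    (ht : 0 < t) (htε : t ≤ ε) (hx : Bornology.IsBounded (u '' ball x t))
    (hz : Bornology.IsBounded (u '' ball z t)) (hs : ‖x - z‖ = s) (hts : 2 * t ≤ s) (hA : 0 ≤ A)
    (htangent : ∀ y, 0 ≤ y → φ y ≤ φ s + A * (y - s)) :
    tugSum u x t - tugSum u z t ≤
      2 * (φ s + μ * ‖w‖ ^ 2 + Q) + 2 * (μ * t ^ 2 * (32 * (‖w‖ / s) + 8)) := by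
  have hxz : x - z ≠ 0 := norm_pos_iff.1 (by linarith)
  set e := NormedSpace.normalize (x - z)
  have he : ‖e‖ = 1 := NormedSpace.norm_normalize hxz
  have hse : s • e = x - z := hs ▸ NormedSpace.norm_smul_normalize (x - z)
  refine tugSum_sub_le_of_response
    (Φ := fun f g ↦ coneBarrier A μ s e w f g + (φ s + Q)) ht hx hz
    (by unfold coneBarrier; fun_prop) (fun f hf g hg ↦ ?_) fun f hf g hg ↦ ?_
  · have hfg := h f (ball_subset_ball htε hf) g (ball_subset_ball htε hg)
    have hφ := htangent ‖x - z + (f - g)‖ (norm_nonneg _)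
    rw [coneBarrier, hse]
    linarith
  · obtain ⟨f', hf', g', hg', hle⟩ := exists_coneBarrier_response (y := w) he ht hts hA hμ
      (mem_ball_zero_iff.1 hf).le (mem_ball_zero_iff.1 hg).le
    exact ⟨f', hf', g', hg', by linarith⟩

lemma tugSum_sub_le_of_le_half {s A : ℝ} (h : IsDominatedNear ε u φ μ Q w x z) (hμ : 0 ≤ μ)
    (ht : 0 < t) (htε : t ≤ ε / 2) (hεr : ε ≤ r) (hw : ‖w‖ ≤ r)
    (hx : Bornology.IsBounded (u '' ball x t)) (hz : Bornology.IsBounded (u '' ball z t))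
    (hs : ‖x - z‖ = s) (hts : 2 * t ≤ s) (hA : 0 ≤ A)
    (htangent : ∀ y, 0 ≤ y → φ y ≤ φ s + A * (y - s)) :
    tugSum u x t - tugSum u z t ≤ 2 * (φ s + μ * ‖w‖ ^ 2 + Q) + 20 * (μ * r * ε) := by
  have hcone := h.tugSum_sub_le_of_two_mul_le hμ ht (by linarith) hx hz hs hts hA htangent
  have hpenalty : t ^ 2 * (32 * (‖w‖ / s) + 8) ≤ 10 * (r * ε) :=
    calc t ^ 2 * (32 * (‖w‖ / s) + 8) ≤ 8 * t * (2 * ‖w‖ + t) :=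
          sq_mul_div_add_le ht.le (by linarith) hts (norm_nonneg w)
      _ ≤ 8 * (ε / 2) * (2 * r + r / 2) := by gcongr <;> linarith
      _ = 10 * (r * ε) := by ring
  linarith [mul_le_mul_of_nonneg_left hpenalty hμ]

lemma tugSum_sub_le_of_lt_two_mul (h : IsDominatedNear ε u φ μ Q w x z) (hμ : 0 ≤ μ)
    (ht : 0 < t) (htε : t ≤ ε) (hx : Bornology.IsBounded (u '' ball x t))
    (hz : Bornology.IsBounded (u '' ball z t)) (hxz : ‖x - z‖ < 2 * t)
    (hB : ∀ y ∈ Icc 0 (‖x - z‖ + 2 * ε), φ y ≤ φ ‖x - z‖ + B) :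
    tugSum u x t - tugSum u z t ≤ φ ‖x - z‖ + B + μ * (‖w‖ + 2 * ε) ^ 2 + Q := by
  refine tugSum_sub_le_of_norm_sub_lt ht hx hz hxz fun f hf g hg ↦ ?_
  have hfε := ball_subset_ball htε hf
  have hgε := ball_subset_ball htε hg
  have hf_norm := mem_ball_zero_iff.1 hfε
  have hg_norm := mem_ball_zero_iff.1 hgε
  have hφ := hB ‖x - z + (f - g)‖ ⟨norm_nonneg _, by
    linarith [norm_add_le (x - z) (f - g), norm_sub_le f g]⟩
  have hw : ‖w + (f + g)‖ ≤ ‖w‖ + 2 * ε := by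
    linarith [norm_add_le w (f + g), norm_add_le f g]
  calc u (x + f) - u (z + g) ≤ φ ‖x - z + (f - g)‖ + μ * ‖w + (f + g)‖ ^ 2 + Q := h f hfε g hgε
    _ ≤ φ ‖x - z‖ + B + μ * (‖w‖ + 2 * ε) ^ 2 + Q := by gcongr

variable [FiniteDimensional ℝ E] [MeasurableSpace E] [BorelSpace E]

lemma setAverage_sub_le (h : IsDominatedNear ε u φ μ Q w x z) (hε : 0 < ε) (hμ : 0 ≤ μ)
    (hx : IntegrableOn (fun h ↦ u (x + h)) (ball 0 ε))
    (hz : IntegrableOn (fun h ↦ u (z + h)) (ball 0 ε)) :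
    (⨍ h in ball 0 ε, u (x + h)) - ⨍ h in ball 0 ε, u (z + h) ≤
      φ ‖x - z‖ + μ * ‖w‖ ^ 2 + Q + 4 * (μ * ε ^ 2) := by
  refine setAverage_ball_sub_le_of_even_part hε hx hz fun f hf ↦ ?_
  have := h.add_neg_le hμ hf hf
  rw [sub_self, add_zero, sub_zero] at this
  linarith

/-- The reflection coupling keeps the penalty and turns the curvature of `φ` into a gain. -/
lemma setAverage_sub_le_of_parabola {s A k : ℝ} (h : IsDominatedNear ε u φ μ Q w x z) (hε : 0 < ε)
    (hμ : 0 ≤ μ) (hx : IntegrableOn (fun h ↦ u (x + h)) (ball 0 ε))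
    (hz : IntegrableOn (fun h ↦ u (z + h)) (ball 0 ε)) (hs : ‖x - z‖ = s) (hεs : ε ≤ s)
    (hk : 0 ≤ k) (hparabola : ∀ y ∈ Icc 0 (2 * s), φ y ≤ φ s + A * (y - s) - k * (y - s) ^ 2) :
    (⨍ h in ball 0 ε, u (x + h)) - ⨍ h in ball 0 ε, u (z + h) ≤
      φ s + μ * ‖w‖ ^ 2 + Q + 4 * (μ * ε ^ 2) - k * ε ^ 2 * reflectionGain E := by
  have hxz : x - z ≠ 0 := norm_pos_iff.1 (by linarith)
  set e := NormedSpace.normalize (x - z)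
  have he : ‖e‖ = 1 := NormedSpace.norm_normalize hxz
  have hse : s • e = x - z := hs ▸ NormedSpace.norm_smul_normalize (x - z)
  refine setAverage_sub_le_of_reflection hε hk (ℝ ∙ e)ᗮ.reflection he hx hz
    (fun f hf ↦ ?_) fun f hf ↦ ?_
  · have hsync := h.add_neg_le hμ hf hf
    rw [sub_self, add_zero, sub_zero, hs] at hsync
    linarith
  · have hfε : f ∈ ball 0 ε := ball_subset_ball (by linarith) hf
    have hmirror := h.add_neg_le (g := (ℝ ∙ e)ᗮ.reflection f) hμ hfε (by simpa using hfε)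
    have hinner := abs_le.1 (abs_real_inner_le_norm e f)
    rw [he, one_mul] at hinner
    have hf_norm := mem_ball_zero_iff.1 hf
    rw [sub_reflection_orthogonal_singleton he, ← hse, ← add_smul, ← sub_smul, norm_smul,
      norm_smul, he, mul_one, mul_one, Real.norm_of_nonneg (by linarith),
      Real.norm_of_nonneg (by linarith)] at hmirror
    have hadd := hparabola (s + 2 * ⟪e, f⟫) ⟨by linarith, by linarith⟩
    have hsub := hparabola (s - 2 * ⟪e, f⟫) ⟨by linarith, by linarith⟩
    rw [map_neg]
    linarith

end IsDominatedNear

variable [FiniteDimensional ℝ E] [MeasurableSpace E] [BorelSpace E]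

namespace IsDPPSolution

lemma sub_le_of_isDominatedNear_of_le (hu : IsDPPSolution Ω ε α β u) (hε : 0 < ε) (hα : 0 ≤ α)
    (hβ : 0 ≤ β) (hαβ : α + β = 1) (hμ : 0 ≤ μ) (hφ : IsConcaveProfile r ε B φ m κ)
    (h : IsDominatedNear ε u φ μ Q w x z) (hx : x ∈ Ω) (hz : z ∈ Ω) (hεs : ε ≤ ‖x - z‖)
    (hsr : ‖x - z‖ < r) (hBQ : B + 4 * (μ * ε * (‖w‖ + ε)) ≤ Q)
    (hκ : μ * (32 * (‖w‖ / ‖x - z‖) + 13) ≤ β * reflectionGain E * κ ‖x - z‖) :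
    u x - u z ≤ φ ‖x - z‖ + μ * ‖w‖ ^ 2 + Q - μ * ε ^ 2 := by
  have hs : ‖x - z‖ ∈ Ioo 0 r := ⟨hε.trans_le hεs, hsr⟩
  set s := ‖x - z‖ with hs_def
  have hs0 : 0 < s := hs.1
  have hφs := hφ.nonneg s (Ioo_subset_Ico_self hs)
  set P := φ s + μ * ‖w‖ ^ 2 + Q
  have htug : ∀ t ∈ Ioc 0 ε,
      tugSum u x t - tugSum u z t ≤ 2 * P + 2 * (μ * ε ^ 2 * (32 * (‖w‖ / s) + 8)) := by
    intro t ht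
    have hbx := hu.isBounded_image_ball hx ht.2
    have hbz := hu.isBounded_image_ball hz ht.2
    rcases le_or_gt (2 * t) s with hts | hts
    · have ht0 := ht.1.le
      have ht2 := ht.2
      refine (h.tugSum_sub_le_of_two_mul_le hμ ht.1 ht.2 hbx hbz hs_def.symm hts
        (hφ.slope_nonneg s hs) (hφ.le_tangent s hs)).trans ?_
      gcongr
    · have hoverlap := h.tugSum_sub_le_of_lt_two_mul hμ ht.1 ht.2 hbx hbz hts
        fun y hy ↦ hφ.le_add_increment hε.le hs hy
      have hpenalty : 0 ≤ 2 * (μ * ε ^ 2 * (32 * (‖w‖ / s) + 8)) := by positivity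
      have hw : 0 ≤ μ * ‖w‖ ^ 2 := by positivity
      linarith
  have hnoise := h.setAverage_sub_le_of_parabola hε hμ (hu.integrableOn_ball_zero hx)
    (hu.integrableOn_ball_zero hz) hs_def.symm hεs (hφ.curvature_nonneg s hs)
    (hφ.le_parabola s hs)
  refine (hu.sub_le hε hα hβ hx hz (fun t ht ↦ htug t ⟨ht.1, by linarith [ht.2]⟩)
    (fun t ht ↦ htug t ⟨by linarith [ht.1], ht.2⟩) hnoise).trans ?_
  have hαp : α * (μ * ε ^ 2 * (32 * (‖w‖ / s) + 8)) ≤ μ * ε ^ 2 * (32 * (‖w‖ / s) + 8) :=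
    mul_le_of_le_one_left (by positivity) (by linarith)
  have hβp : β * (4 * (μ * ε ^ 2)) ≤ 4 * (μ * ε ^ 2) :=
    mul_le_of_le_one_left (by positivity) (by linarith)
  have hP : α * P + β * P = P := by rw [← add_mul, hαβ, one_mul]
  linarith [mul_le_mul_of_nonneg_left hκ (sq_nonneg ε)]

lemma sub_le_of_isDominatedNear_of_lt (hu : IsDPPSolution Ω ε α β u) (hε : 0 < ε) (hα : 0 < α)
    (hβ : 0 ≤ β) (hαβ : α + β = 1) (hμ : 0 ≤ μ) (hφ : IsConcaveProfile r ε B φ m κ)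
    (h : IsDominatedNear ε u φ μ Q w x z) (hx : x ∈ Ω) (hz : z ∈ Ω) (hs : ‖x - z‖ ∈ Ioo 0 r)
    (hsε : ‖x - z‖ < ε) (hεr : ε ≤ r) (hw : ‖w‖ ≤ r) (hBQ : B + 48 / α * (μ * r * ε) ≤ Q) :
    u x - u z ≤ φ ‖x - z‖ + μ * ‖w‖ ^ 2 + Q - μ * ε ^ 2 := by
  set s := ‖x - z‖ with hs_def
  have hs0 : 0 < s := hs.1
  have hφs := hφ.nonneg s (Ioo_subset_Ico_self hs)
  have hεε : μ * ε ^ 2 ≤ μ * r * ε := by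
    rw [sq, ← mul_assoc]
    gcongr
  have hwε : μ * ‖w‖ * ε ≤ μ * r * ε := by gcongr
  have hw2 : 0 ≤ μ * ‖w‖ ^ 2 := by positivity
  have hrε : 0 ≤ μ * r * ε := (by positivity : 0 ≤ μ * ε ^ 2).trans hεε
  set P := φ s + μ * ‖w‖ ^ 2 + Q
  have hoverlap : ∀ t ∈ Ioc 0 ε, s < 2 * t →
      tugSum u x t - tugSum u z t ≤ 2 * P - (48 / α - 8) * (μ * r * ε) := fun t ht hts ↦ by
    have hle := h.tugSum_sub_le_of_lt_two_mul hμ ht.1 ht.2 (hu.isBounded_image_ball hx ht.2)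
      (hu.isBounded_image_ball hz ht.2) hts fun y hy ↦ hφ.le_add_increment hε.le hs hy
    linarith
  have hJ : 48 ≤ 48 / α := (le_div_iff₀ hα).2 (by linarith)
  have hsmall : ∀ t ∈ Ioc 0 (ε / 2),
      tugSum u x t - tugSum u z t ≤ 2 * P + 20 * (μ * r * ε) := fun t ht ↦ by
    have htε : t ≤ ε := by linarith [ht.2]
    rcases le_or_gt (2 * t) s with hts | hts
    · exact h.tugSum_sub_le_of_le_half hμ ht.1 ht.2 hεr hw (hu.isBounded_image_ball hx htε)
        (hu.isBounded_image_ball hz htε) hs_def.symm hts (hφ.slope_nonneg s hs)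
        (hφ.le_tangent s hs)
    · linarith [hoverlap t ⟨ht.1, htε⟩ hts, mul_le_mul_of_nonneg_right hJ hrε]
  refine (hu.sub_le hε hα.le hβ hx hz hsmall
    (fun t ht ↦ hoverlap t ⟨by linarith [ht.1], ht.2⟩ (by linarith [ht.1]))
    (h.setAverage_sub_le hε hμ (hu.integrableOn_ball_zero hx)
      (hu.integrableOn_ball_zero hz))).trans ?_
  have hαJ : α * (48 / α * (μ * r * ε)) = 48 * (μ * r * ε) := by field_simp
  have hα1 : α * (μ * r * ε) ≤ μ * r * ε := mul_le_of_le_one_left hrε (by linarith)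
  have hβ1 : β * (4 * (μ * ε ^ 2)) ≤ 4 * (μ * ε ^ 2) :=
    mul_le_of_le_one_left (by positivity) (by linarith)
  have hP : α * P + β * P = P := by rw [← add_mul, hαβ, one_mul]
  linarith

/-- If the differences of `u` exceed the barrier by at most `S`, then they exceed it by at most
`S - μ * ε ^ 2`, so that they do not exceed it at all. -/
theorem sub_le_pairBarrier (hu : IsDPPSolution Ω ε α β u) (hε : 0 < ε) (hα : 0 < α) (hβ : 0 ≤ β)
    (hαβ : α + β = 1) (hεr : ε ≤ r) (hμ : 0 < μ) (hφ : IsConcaveProfile r ε B φ m κ) {c : E} {L : ℝ}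
    (hL : B + 48 / α * (μ * r * ε) ≤ L) (hc : ball ((1 / 2 : ℝ) • c) r ⊆ Ω)
    (hmid : ∀ a ∈ extendedDomain Ω ε, ∀ b ∈ extendedDomain Ω ε, ‖a - b‖ < r →
      u a - u b ≤ φ ‖a - b‖ + μ * r ^ 2)
    (hfar : ∀ a ∈ extendedDomain Ω ε, ∀ b ∈ extendedDomain Ω ε, r ≤ ‖a - b‖ → ‖a - b‖ ≤ 3 * r →
      u a - u b ≤ φ ‖a - b‖)
    (hκ : ∀ x z, ‖x + z - c‖ < r → ε ≤ ‖x - z‖ → ‖x - z‖ < r →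
      pairBarrier φ μ L c x z < u x - u z →
      μ * (32 * (‖x + z - c‖ / ‖x - z‖) + 13) ≤ β * reflectionGain E * κ ‖x - z‖)
    (hX : ‖x + z - c‖ < r) (hs : ‖x - z‖ ∈ Ioo 0 r) : u x - u z ≤ pairBarrier φ μ L c x z := by
  have hr : 0 < r := hε.trans_le hεr
  have hB := hφ.increment_nonneg hε.le hr
  have hμrε : 0 ≤ μ * r * ε := by positivity
  have hJ : 48 * (μ * r * ε) ≤ 48 / α * (μ * r * ε) := by
    gcongr
    exact (le_div_iff₀ hα).2 (by linarith)
  have hL0 : 0 ≤ L := by linarith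
  have hmem : ∀ x z, ‖x + z - c‖ < r → ‖x - z‖ < r → x ∈ Ω ∧ z ∈ Ω := fun x z hX hsr ↦
    ⟨hc (mem_ball_half_smul hX hsr),
      hc (mem_ball_half_smul (z := x) (by rwa [add_comm]) (by rwa [norm_sub_rev]))⟩
  refine sub_nonpos.1 (nonpos_of_forall_upperBound_improves
    (D := {p : E × E | ‖p.1 + p.2 - c‖ < r ∧ ‖p.1 - p.2‖ ∈ Ioo 0 r})
    (f := fun p ↦ u p.1 - u p.2 - pairBarrier φ μ L c p.1 p.2)
    (by positivity : 0 < μ * ε ^ 2) ?_ ?_ (x, z) ⟨hX, hs⟩)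
  · obtain ⟨K, hK⟩ := isBounded_iff_forall_norm_le.1 hu.isBounded_image
    refine ⟨2 * K, forall_mem_image.2 fun p hp ↦ ?_⟩
    obtain ⟨hxΩ, hzΩ⟩ := hmem p.1 p.2 hp.1 hp.2.2
    have hx := (abs_le.1 (hK _ (mem_image_of_mem u (Or.inl hxΩ)))).2
    have hz := (abs_le.1 (hK _ (mem_image_of_mem u (Or.inl hzΩ)))).1
    have := pairBarrier_nonneg (c := c) hμ.le hL0 (hφ.nonneg _ (Ioo_subset_Ico_self hp.2))
    linarith
  · rintro S hS hle ⟨x, z⟩ ⟨hX, hs⟩ hpos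
    obtain ⟨hxΩ, hzΩ⟩ := hmem x z hX hs.2
    have hdom := isDominatedNear_of_forall_sub_le_pairBarrier hεr hxΩ hzΩ hs.2.le
      fun a ha b hb hab ↦ sub_le_pairBarrier_of_norm_sub_le hμ.le hL0 hS hr hφ.nonneg hmid hfar
        (fun a b hX hs ↦ sub_le_iff_le_add'.1 (hle (a, b) ⟨hX, hs⟩)) ha hb hab
    have himproved : u x - u z ≤
        φ ‖x - z‖ + μ * ‖x + z - c‖ ^ 2 + (L + S) - μ * ε ^ 2 := by
      rcases le_or_gt ε ‖x - z‖ with hεs | hsε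
      · have hBQ : μ * ε * (‖x + z - c‖ + ε) ≤ μ * ε * (r + r) := by gcongr
        exact hu.sub_le_of_isDominatedNear_of_le hε hα.le hβ hαβ hμ.le hφ hdom hxΩ hzΩ hεs hs.2
          (by linarith) (hκ x z hX hεs hs.2 (sub_pos.1 hpos))
      · exact hu.sub_le_of_isDominatedNear_of_lt hε hα hβ hαβ hμ.le hφ hdom hxΩ hzΩ hs hsε hεr
          hX.le (by linarith)
    simp only [pairBarrier]
    linarith

end IsDPPSolution

end Comparison

section Profiles

variable {r ε s y C H K : ℝ}

lemma sqrt_le_tangent (hs : 0 < s) (hy : 0 ≤ y) : √y ≤ √s + (y - s) / (2 * √s) := by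
  have hgap : √s + (y - s) / (2 * √s) - √y = (√y - √s) ^ 2 / (2 * √s) := by
    have := Real.sqrt_pos.2 hs
    field_simp
    linear_combination Real.sq_sqrt hs.le - Real.sq_sqrt hy
  have : 0 ≤ (√y - √s) ^ 2 / (2 * √s) := by positivity
  linarith

lemma sqrt_le_parabola (hs : 0 < s) (hy : y ∈ Icc 0 (2 * s)) :
    √y ≤ √s + (y - s) / (2 * √s) - (y - s) ^ 2 / (16 * (s * √s)) := by
  have hy2 := Real.sq_sqrt hy.1
  have hs2 := Real.sq_sqrt hs.le
  have hb := Real.sqrt_pos.2 hs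
  have hroots : (√y) ^ 2 ≤ 2 * (√s) ^ 2 := by rw [hy2, hs2]; exact hy.2
  rw [← hs2, ← hy2, Real.sqrt_sq hb.le, Real.sqrt_sq (Real.sqrt_nonneg y)]
  generalize √s = b at *
  generalize √y = a at *
  have hgap : b + (a ^ 2 - b ^ 2) / (2 * b) - (a ^ 2 - b ^ 2) ^ 2 / (16 * (b ^ 2 * b)) - a =
      (a - b) ^ 2 * (8 * b ^ 2 - (a + b) ^ 2) / (16 * b ^ 3) := by
    field_simp
    ring
  have hfactor : 0 ≤ 8 * b ^ 2 - (a + b) ^ 2 := by linarith [sq_nonneg (a - b)]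
  have : 0 ≤ (a - b) ^ 2 * (8 * b ^ 2 - (a + b) ^ 2) / (16 * b ^ 3) := by positivity
  linarith

lemma sqrt_le_sqrt_add_two_mul_sqrt (hs : 0 ≤ s) (hε : 0 ≤ ε) (hy : y ≤ s + 2 * ε) :
    √y ≤ √s + 2 * √ε := by
  refine (Real.sqrt_le_left (by positivity)).2 ?_
  have : 0 ≤ √s * √ε := by positivity
  linarith [Real.sq_sqrt hs, Real.sq_sqrt hε]

lemma isConcaveProfile_sqrt (hε : 0 ≤ ε) (hH : 0 ≤ H) :
    IsConcaveProfile r ε (2 * H * √ε) (fun s ↦ H * √s) (fun s ↦ H / (2 * √s))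
      fun s ↦ H / (16 * (s * √s)) where
  nonneg s _ := by positivity
  slope_nonneg s _ := by positivity
  curvature_nonneg s hs := by
    have := hs.1
    positivity
  le_tangent s hs y hy := (mul_le_mul_of_nonneg_left (sqrt_le_tangent hs.1 hy) hH).trans_eq
    (by ring)
  le_parabola s hs y hy := (mul_le_mul_of_nonneg_left (sqrt_le_parabola hs.1 hy) hH).trans_eq
    (by ring)
  increment_le s hs y hy :=
    (mul_le_mul_of_nonneg_left (sqrt_le_sqrt_add_two_mul_sqrt hs.1.le hε hy.2) hH).trans_eq
      (by ring)

lemma sqrt_sqrt_pow_four (hs : 0 ≤ s) : √√s ^ 4 = s := by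
  rw [pow_mul _ 2 2, Real.sq_sqrt (Real.sqrt_nonneg s), Real.sq_sqrt hs]

lemma tangent_le_mul_sqrt_sqrt (hs : 0 ≤ s) (hy : 0 ≤ y) :
    s * √√s + 5 / 4 * √√s * (y - s) ≤ y * √√y := by
  have ha := Real.sqrt_nonneg √y
  have hb := Real.sqrt_nonneg √s
  have hy4 := sqrt_sqrt_pow_four hy
  have hs4 := sqrt_sqrt_pow_four hs
  generalize √√y = a at *
  generalize √√s = b at *
  have : 0 ≤ (a - b) ^ 2 * (4 * a ^ 3 + 3 * a ^ 2 * b + 2 * a * b ^ 2 + b ^ 3) / 4 := by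
    positivity
  rw [← hs4, ← hy4]
  linarith

lemma sq_cubic_le {a b : ℝ} (ha : 0 ≤ a) (hb : 0 ≤ b) (hab : a ≤ 2 * b) :
    (a ^ 3 + a ^ 2 * b + a * b ^ 2 + b ^ 3) ^ 2 ≤
      15 * b ^ 3 * (4 * a ^ 3 + 3 * a ^ 2 * b + 2 * a * b ^ 2 + b ^ 3) := by
  have hcubic : a ^ 3 + a ^ 2 * b + a * b ^ 2 + b ^ 3 ≤ 15 * b ^ 3 :=
    calc a ^ 3 + a ^ 2 * b + a * b ^ 2 + b ^ 3
        ≤ (2 * b) ^ 3 + (2 * b) ^ 2 * b + (2 * b) * b ^ 2 + b ^ 3 := by gcongr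
      _ = 15 * b ^ 3 := by ring
  rw [sq]
  gcongr ?_ * ?_
  have : 0 ≤ 3 * a ^ 3 + 2 * a ^ 2 * b + a * b ^ 2 := by positivity
  linarith

lemma parabola_le_mul_sqrt_sqrt (hs : 0 < s) (hy : y ∈ Icc 0 (2 * s)) :
    s * √√s + 5 / 4 * √√s * (y - s) + (y - s) ^ 2 / (60 * √√s ^ 3) ≤ y * √√y := by
  have ha := Real.sqrt_nonneg √y
  have hb := Real.sqrt_pos.2 (Real.sqrt_pos.2 hs)
  have hy4 := sqrt_sqrt_pow_four hy.1
  have hs4 := sqrt_sqrt_pow_four hs.le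
  generalize √√y = a at *
  generalize √√s = b at *
  have hab : a ≤ 2 * b := by
    refine le_of_pow_le_pow_left₀ four_ne_zero (by positivity) ?_
    linarith [hy.2]
  have hgap : a ^ 4 * a -
      (b ^ 4 * b + 5 / 4 * b * (a ^ 4 - b ^ 4) + (a ^ 4 - b ^ 4) ^ 2 / (60 * b ^ 3)) =
      (a - b) ^ 2 * (15 * b ^ 3 * (4 * a ^ 3 + 3 * a ^ 2 * b + 2 * a * b ^ 2 + b ^ 3) -
        (a ^ 3 + a ^ 2 * b + a * b ^ 2 + b ^ 3) ^ 2) / (60 * b ^ 3) := by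
    field_simp
    ring
  have := div_nonneg (mul_nonneg (sq_nonneg (a - b)) (sub_nonneg.2 (sq_cubic_le ha hb.le hab)))
    (by positivity : 0 ≤ 60 * b ^ 3)
  rw [← hs4, ← hy4]
  linarith

lemma isConcaveProfile_linear_sub (hK : 0 ≤ K) (hC : 5 / 4 * K * √√r ≤ C) :
    IsConcaveProfile r ε (2 * C * ε) (fun s ↦ C * s - K * (s * √√s))
      (fun s ↦ C - 5 / 4 * K * √√s) fun s ↦ K / (60 * √√s ^ 3) := by
  have hroot : ∀ s ≤ r, 5 / 4 * K * √√s ≤ C := fun s hs ↦ hC.trans' (by gcongr)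
  have htangent : ∀ s ∈ Ioo 0 r, ∀ y, 0 ≤ y →
      C * y - K * (y * √√y) ≤ C * s - K * (s * √√s) + (C - 5 / 4 * K * √√s) * (y - s) :=
    fun s hs y hy ↦ by
      linarith [mul_le_mul_of_nonneg_left (tangent_le_mul_sqrt_sqrt hs.1.le hy) hK]
  refine ⟨fun s hs ↦ ?_, fun s hs ↦ sub_nonneg.2 (hroot s hs.2.le), fun s _ ↦ by positivity,
    htangent, fun s hs y hy ↦ ?_, fun s hs y hy ↦ (htangent s hs y (hs.1.le.trans hy.1)).trans ?_⟩
  · have hKs : 0 ≤ K * √√s := by positivity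
    linarith [mul_nonneg hs.1 (by linarith [hroot s hs.2.le] : 0 ≤ C - K * √√s)]
  · have hparabola := mul_le_mul_of_nonneg_left (parabola_le_mul_sqrt_sqrt hs.1 hy) hK
    rw [mul_add, ← mul_div_assoc, mul_div_right_comm] at hparabola
    linarith
  · have hKs : 0 ≤ 5 / 4 * K * √√s := by positivity
    have hslope : (C - 5 / 4 * K * √√s) * (y - s) ≤ C * (2 * ε) :=
      mul_le_mul (by linarith) (by linarith [hy.2]) (by linarith [hy.1])
        (by linarith [hroot s hs.2.le])
    linarith

lemma two_le_linear_sub (hr : 0 < r) (hK : 0 ≤ K) (hC : K * √√(3 * r) + 2 / r ≤ C)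
    (hs : s ∈ Icc r (3 * r)) : 2 ≤ C * s - K * (s * √√s) := by
  have hroot : K * √√s ≤ K * √√(3 * r) := by
    have := hs.2
    gcongr
  calc 2 = 2 / r * r := by field_simp
    _ ≤ (C - K * √√s) * s :=
      mul_le_mul (by linarith) hs.1 hr.le (by linarith [(by positivity : 0 ≤ 2 / r)])
    _ = C * s - K * (s * √√s) := by ring

end Profiles

section Estimates

/-- The coefficient of `δ * ε` in the offset that absorbs the quadratic penalty at pairs closer
than `ε`. -/
noncomputable def offsetConst (α r : ℝ) : ℝ := 96 / (α * r)

/-- The coefficient of `√s` in the interior Hölder estimate. -/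
noncomputable def holderConst (E : Type*) [NormedAddCommGroup E] [NormedSpace ℝ E] (β r : ℝ) : ℝ :=
  (2 + 1440 / (β * reflectionGain E)) / √r

/-- By the Hölder estimate, a pair at distance `s` violating a penalised barrier centred at `c` has
its sum within `contactConst E α β r * √√s` of `c`. -/
noncomputable def contactConst (E : Type*) [NormedAddCommGroup E] [NormedSpace ℝ E]
    (α β r : ℝ) : ℝ :=
  r * √((3 * holderConst E β r + offsetConst α r * √r) / 2)

/-- The coefficient of `s * √√s` in the profile of the Lipschitz estimate. -/
noncomputable def concavityConst (E : Type*) [NormedAddCommGroup E] [NormedSpace ℝ E]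
    (α β r : ℝ) : ℝ :=
  60 / (β * reflectionGain E) * (2 / r ^ 2 * (32 * contactConst E α β r + 13 * √√r ^ 3))

/-- The slope at `0` of the profile of the Lipschitz estimate. -/
noncomputable def lipschitzConst (E : Type*) [NormedAddCommGroup E] [NormedSpace ℝ E]
    (α β r : ℝ) : ℝ :=
  2 * concavityConst E α β r * √√(3 * r) + 2 / r

lemma offsetConst_nonneg {α r : ℝ} (hα : 0 ≤ α) (hr : 0 ≤ r) : 0 ≤ offsetConst α r := by
  unfold offsetConst
  positivity

variable {E : Type*} [NormedAddCommGroup E] [InnerProductSpace ℝ E] {Ω : Set E}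
  {ε α β r s B N X δ : ℝ} {u : E → ℝ} {φ m κ : ℝ → ℝ} {x z : E}

lemma holderConst_nonneg (hβ : 0 ≤ β) : 0 ≤ holderConst E β r := by
  have := reflectionGain_pos E
  unfold holderConst
  positivity

lemma contactConst_nonneg (hr : 0 ≤ r) : 0 ≤ contactConst E α β r := by
  unfold contactConst
  positivity

lemma concavityConst_nonneg (hβ : 0 ≤ β) (hr : 0 ≤ r) : 0 ≤ concavityConst E α β r := by
  have := reflectionGain_pos E
  have := contactConst_nonneg (E := E) (α := α) (β := β) hr
  unfold concavityConst
  positivity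

lemma two_div_le_lipschitzConst (hβ : 0 ≤ β) (hr : 0 ≤ r) : 2 / r ≤ lipschitzConst E α β r := by
  have := concavityConst_nonneg (E := E) (α := α) hβ hr
  exact le_add_of_nonneg_left (by positivity)

lemma two_le_holderConst_mul_sqrt (hβ : 0 ≤ β) (hr : 0 < r) (hrs : r ≤ s) :
    2 ≤ holderConst E β r * √s := by
  have := reflectionGain_pos E
  have := holderConst_nonneg (E := E) (r := r) hβ
  have hq := Real.sqrt_pos.2 hr
  calc 2 ≤ 2 + 1440 / (β * reflectionGain E) := le_add_of_nonneg_right (by positivity)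
    _ = holderConst E β r * √r := (div_mul_cancel₀ _ hq.ne').symm
    _ ≤ holderConst E β r * √s := by gcongr

lemma penalty_le_holder_curvature (hβ : 0 < β) (hX : X ≤ r) (hs : s ∈ Ioo 0 r) :
    2 / r ^ 2 * (32 * (X / s) + 13) ≤
      β * reflectionGain E * (holderConst E β r / (16 * (s * √s))) := by
  have hg := reflectionGain_pos E
  have hs0 := hs.1
  have hr : 0 < r := hs0.trans hs.2
  have := Real.sqrt_pos.2 hr
  have hsr : √s ≤ √r := Real.sqrt_le_sqrt hs.2.le
  have := Real.sqrt_pos.2 hs0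
  have hsqr := Real.sq_sqrt hr.le
  have hholder : 90 / √r ≤ β * reflectionGain E * holderConst E β r / 16 := by
    have : 0 ≤ β * reflectionGain E / (8 * √r) := by positivity
    have hexpand : β * reflectionGain E * holderConst E β r / 16 =
        β * reflectionGain E / (8 * √r) + 90 / √r := by
      unfold holderConst
      field_simp
      ring
    linarith
  have hpenalty : 2 / r ^ 2 * (32 * (X / s) + 13) * (s * √s) ≤ 90 / √r :=
    calc 2 / r ^ 2 * (32 * (X / s) + 13) * (s * √s) = 2 / r ^ 2 * (32 * X + 13 * s) * √s := by
          field_simp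
      _ ≤ 2 / r ^ 2 * (32 * r + 13 * r) * √r := by
          have := hs.2.le
          gcongr
      _ = 90 / √r := by
          field_simp
          linear_combination 90 * hsqr
  calc 2 / r ^ 2 * (32 * (X / s) + 13)
      ≤ β * reflectionGain E * holderConst E β r / 16 / (s * √s) :=
        (le_div_iff₀ (by positivity)).2 (hpenalty.trans hholder)
    _ = β * reflectionGain E * (holderConst E β r / (16 * (s * √s))) := by field_simp

lemma penalty_le_lipschitz_curvature (hβ : 0 < β) (hX : X ≤ contactConst E α β r * √√s)
    (hs : s ∈ Ioo 0 r) :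
    2 / r ^ 2 * (32 * (X / s) + 13) ≤
      β * reflectionGain E * (concavityConst E α β r / (60 * √√s ^ 3)) := by
  have hg := reflectionGain_pos E
  have hs0 := hs.1
  have := Real.sqrt_pos.2 (Real.sqrt_pos.2 hs0)
  have hs4 := sqrt_sqrt_pow_four hs0.le
  have hXs : X / s * √√s ^ 3 ≤ contactConst E α β r := by
    rw [div_mul_eq_mul_div, div_le_iff₀ hs0]
    calc X * √√s ^ 3 ≤ contactConst E α β r * √√s * √√s ^ 3 := by gcongr
      _ = contactConst E α β r * s := by rw [mul_assoc, ← pow_succ', hs4]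
  have hpenalty : (32 * (X / s) + 13) * √√s ^ 3 ≤ 32 * contactConst E α β r + 13 * √√r ^ 3 := by
    have : √√s ^ 3 ≤ √√r ^ 3 := by
      have := hs.2.le
      gcongr
    linarith
  calc 2 / r ^ 2 * (32 * (X / s) + 13)
      ≤ 2 / r ^ 2 * ((32 * contactConst E α β r + 13 * √√r ^ 3) / √√s ^ 3) := by
        gcongr
        exact (le_div_iff₀ (by positivity)).2 hpenalty
    _ = β * reflectionGain E * (concavityConst E α β r / (60 * √√s ^ 3)) := by
        unfold concavityConst
        field_simp

variable [FiniteDimensional ℝ E] [MeasurableSpace E] [BorelSpace E]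

namespace IsDPPSolution

lemma sub_le_of_isConcaveProfile (hu : IsDPPSolution Ω ε α β u) (hε : 0 < ε) (hα : 0 < α)
    (hβ : 0 ≤ β) (hαβ : α + β = 1) (hεr : ε ≤ r) (hN : 0 ≤ N) (hδ : 0 < δ)
    (hflat : ∀ a ∈ extendedDomain Ω ε, ∀ b ∈ extendedDomain Ω ε, u a - u b ≤ N * ‖a - b‖ + 2 * δ)
    (hφ : IsConcaveProfile r ε B φ m κ) (hfar : ∀ s ∈ Icc r (3 * r), 2 ≤ φ s)
    (hκ : ∀ a b, ‖a + b - (x + z)‖ < r → ε ≤ ‖a - b‖ → ‖a - b‖ < r →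
      N * (‖a - b‖ + 2 * ε) + δ * (2 / r ^ 2 * ‖a + b - (x + z)‖ ^ 2) < u a - u b →
      2 / r ^ 2 * (32 * (‖a + b - (x + z)‖ / ‖a - b‖) + 13) ≤
        β * reflectionGain E * κ ‖a - b‖)
    (hs : ‖x - z‖ ∈ Ioo 0 r) (hc : ball ((1 / 2 : ℝ) • (x + z)) r ⊆ Ω) :
    u x - u z ≤ N * (‖x - z‖ + 2 * ε) + δ * (φ ‖x - z‖ + B + offsetConst α r * ε) := by
  have hr : 0 < r := hε.trans_le hεr
  have hμr : 2 / r ^ 2 * δ * r ^ 2 = 2 * δ := by field_simp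
  have hB := mul_nonneg hδ.le (hφ.increment_nonneg hε.le hr)
  have hJ := mul_nonneg hδ.le (mul_nonneg (offsetConst_nonneg hα.le hr.le) hε.le)
  have hbarrier := hu.sub_le_pairBarrier (x := x) (z := z) (c := x + z) (μ := 2 / r ^ 2 * δ)
    (L := 2 * N * ε + δ * B + δ * (offsetConst α r * ε)) hε hα hβ hαβ hεr (by positivity)
    (hφ.affine_add_smul hN hδ.le) ?_ hc ?_ ?_ ?_ (by simpa using hr) hs
  · simp only [pairBarrier, sub_self, norm_zero] at hbarrier
    linarith
  · refine add_le_add_right (le_of_eq ?_) _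
    unfold offsetConst
    field_simp
    norm_num
  · intro a ha b hb hab
    have := mul_nonneg hδ.le (hφ.nonneg ‖a - b‖ ⟨norm_nonneg _, hab⟩)
    linarith [hflat a ha b hb]
  · intro a ha b hb hrab hab
    linarith [hflat a ha b hb, mul_le_mul_of_nonneg_left (hfar ‖a - b‖ ⟨hrab, hab⟩) hδ.le]
  · intro a b hX hεs hsr hlt
    simp only [pairBarrier] at hlt
    have := mul_nonneg hδ.le (hφ.nonneg ‖a - b‖ ⟨norm_nonneg _, hsr⟩)
    linarith [mul_le_mul_of_nonneg_left (hκ a b hX hεs hsr (by linarith)) hδ.le]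

lemma sub_le_holder (hu : IsDPPSolution Ω ε α β u) (hε : 0 < ε) (hα : 0 < α) (hβ : 0 < β)
    (hαβ : α + β = 1) (hεr : ε ≤ r) (hN : 0 ≤ N) (hδ : 0 < δ)
    (hflat : ∀ a ∈ extendedDomain Ω ε, ∀ b ∈ extendedDomain Ω ε, u a - u b ≤ N * ‖a - b‖ + 2 * δ)
    (hs : ‖x - z‖ ∈ Ioo 0 r) (hc : ball ((1 / 2 : ℝ) • (x + z)) r ⊆ Ω) :
    u x - u z ≤ N * (‖x - z‖ + 2 * ε) + δ * (holderConst E β r * √‖x - z‖ +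
      2 * holderConst E β r * √ε + offsetConst α r * ε) :=
  hu.sub_le_of_isConcaveProfile hε hα hβ.le hαβ hεr hN hδ hflat
    (isConcaveProfile_sqrt hε.le (holderConst_nonneg hβ.le))
    (fun _ ht ↦ two_le_holderConst_mul_sqrt hβ.le (hε.trans_le hεr) ht.1)
    (fun _ _ hX hεs hsr _ ↦ penalty_le_holder_curvature hβ hX.le ⟨hε.trans_le hεs, hsr⟩) hs hc

lemma norm_le_contactConst_mul {w : E} (hu : IsDPPSolution Ω ε α β u) (hε : 0 < ε) (hα : 0 < α)
    (hβ : 0 < β) (hαβ : α + β = 1) (hN : 0 ≤ N) (hδ : 0 < δ)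
    (hflat : ∀ a ∈ extendedDomain Ω ε, ∀ b ∈ extendedDomain Ω ε, u a - u b ≤ N * ‖a - b‖ + 2 * δ)
    (hc : ball ((1 / 2 : ℝ) • (x + z)) r ⊆ Ω) (hεs : ε ≤ ‖x - z‖) (hsr : ‖x - z‖ < r)
    (hlt : N * (‖x - z‖ + 2 * ε) + δ * (2 / r ^ 2 * ‖w‖ ^ 2) < u x - u z) :
    ‖w‖ ≤ contactConst E α β r * √√‖x - z‖ := by
  have hs0 : 0 < ‖x - z‖ := hε.trans_le hεs
  have hr : 0 < r := hs0.trans hsr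
  have hholder := hu.sub_le_holder hε hα hβ hαβ (hεs.trans hsr.le) hN hδ hflat ⟨hs0, hsr⟩ hc
  have hH := holderConst_nonneg (E := E) (r := r) hβ.le
  have hJ := offsetConst_nonneg hα.le hr.le
  unfold contactConst
  set H := holderConst E β r
  set J := offsetConst α r
  set s := ‖x - z‖
  have hsqε : √ε ≤ √s := Real.sqrt_le_sqrt hεs
  have hε_le : ε ≤ √r * √s :=
    calc ε ≤ s := hεs
      _ = √s * √s := (Real.mul_self_sqrt hs0.le).symm
      _ ≤ √r * √s := by gcongr
  have hprofile : H * √s + 2 * H * √ε + J * ε ≤ (3 * H + J * √r) * √s :=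
    calc H * √s + 2 * H * √ε + J * ε ≤ H * √s + 2 * H * √s + J * (√r * √s) := by gcongr
      _ = (3 * H + J * √r) * √s := by ring
  have hsq : 2 / r ^ 2 * ‖w‖ ^ 2 ≤ (3 * H + J * √r) * √s :=
    hprofile.trans' (lt_of_mul_lt_mul_left (by linarith) hδ.le).le
  rw [mul_assoc, ← Real.sqrt_mul (by positivity), ← div_le_iff₀' hr]
  refine Real.le_sqrt_of_sq_le ?_
  calc (‖w‖ / r) ^ 2 = 2 / r ^ 2 * ‖w‖ ^ 2 / 2 := by ring
    _ ≤ (3 * H + J * √r) * √s / 2 := by gcongr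
    _ = (3 * H + J * √r) / 2 * √s := by ring

lemma sub_le_lipschitz (hu : IsDPPSolution Ω ε α β u) (hε : 0 < ε) (hα : 0 < α) (hβ : 0 < β)
    (hαβ : α + β = 1) (hεr : ε ≤ r) (hN : 0 ≤ N) (hδ : 0 < δ)
    (hflat : ∀ a ∈ extendedDomain Ω ε, ∀ b ∈ extendedDomain Ω ε, u a - u b ≤ N * ‖a - b‖ + 2 * δ)
    (hs : ‖x - z‖ ∈ Ioo 0 r) (hc : ball ((1 / 2 : ℝ) • (x + z)) (2 * r) ⊆ Ω) :
    u x - u z ≤ N * (‖x - z‖ + 2 * ε) + δ * (lipschitzConst E α β r * ‖x - z‖ +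
      (2 * lipschitzConst E α β r + offsetConst α r) * ε) := by
  have hr : 0 < r := hε.trans_le hεr
  have hK := concavityConst_nonneg (E := E) (α := α) hβ.le hr.le
  have hroot : √√r ≤ √√(3 * r) := by
    gcongr
    linarith
  have hKroot := mul_le_mul_of_nonneg_left hroot hK
  have hKroot_nonneg : 0 ≤ concavityConst E α β r * √√(3 * r) := by positivity
  have hr2 : 0 ≤ 2 / r := by positivity
  have hprofile := isConcaveProfile_linear_sub (C := lipschitzConst E α β r) (r := r) (ε := ε) hK
    (by unfold lipschitzConst; linarith)
  refine (hu.sub_le_of_isConcaveProfile hε hα hβ.le hαβ hεr hN hδ hflat hprofile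
    (fun t ht ↦ two_le_linear_sub hr hK (by unfold lipschitzConst; linarith) ht)
    (fun a b hX hεs hsr hlt ↦ ?_) hs ((ball_subset_ball (by linarith)).trans hc)).trans ?_
  · have hball : ball ((1 / 2 : ℝ) • (a + b)) r ⊆ Ω := by
      refine (ball_subset_ball' ?_).trans hc
      rw [dist_eq_norm, ← smul_sub, norm_smul, Real.norm_of_nonneg (by norm_num)]
      linarith
    exact penalty_le_lipschitz_curvature hβ
      (hu.norm_le_contactConst_mul hε hα hβ hαβ hN hδ hflat hball hεs hsr hlt)
      ⟨hε.trans_le hεs, hsr⟩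
  · have : 0 ≤ concavityConst E α β r * (‖x - z‖ * √√‖x - z‖) := by positivity
    linarith [mul_nonneg hδ.le this]

lemma sub_le_of_mem_ball {z₀ : E} (hu : IsDPPSolution Ω ε α β u) (hε : 0 < ε) (hα : 0 < α)
    (hβ : 0 < β) (hαβ : α + β = 1) (hr : 0 < r) (hN : 0 ≤ N) (hδ : 0 < δ)
    (hflat : ∀ a ∈ extendedDomain Ω ε, ∀ b ∈ extendedDomain Ω ε, u a - u b ≤ N * ‖a - b‖ + 2 * δ)
    (hball : ball z₀ (3 * r) ⊆ Ω) (hx : x ∈ ball z₀ r) (hz : z ∈ ball z₀ r) :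
    u x - u z ≤ (N + (2 * lipschitzConst E α β r + offsetConst α r) * δ) * ‖x - z‖ +
      (2 * N + (2 * lipschitzConst E α β r + offsetConst α r) * δ) * ε := by
  have hC := two_div_le_lipschitzConst (E := E) (α := α) hβ.le hr.le
  have hC0 : 0 ≤ lipschitzConst E α β r := hC.trans' (by positivity)
  have hJ := offsetConst_nonneg hα.le hr.le
  have hmem : ball z₀ r ⊆ extendedDomain Ω ε :=
    ((ball_subset_ball (by linarith)).trans hball).trans subset_union_left
  have hCr : ∀ t, r ≤ t → 2 * δ ≤ lipschitzConst E α β r * t * δ := fun t ht ↦ by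
    gcongr
    calc 2 = 2 / r * r := by field_simp
      _ ≤ lipschitzConst E α β r * t := by gcongr
  set C := lipschitzConst E α β r
  set J := offsetConst α r
  have hs0 := norm_nonneg (x - z)
  have hCs : 0 ≤ C * ‖x - z‖ * δ := by positivity
  have hCε : 0 ≤ C * ε * δ := by positivity
  have hJs : 0 ≤ J * ‖x - z‖ * δ := by positivity
  have hJε : 0 ≤ J * ε * δ := by positivity
  have hNε : 0 ≤ N * ε := by positivity
  rcases le_or_gt r ε with hrε | hεr
  · linarith [hflat x (hmem hx) z (hmem hz), hCr ε hrε]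
  rcases le_or_gt r ‖x - z‖ with hrs | hsr
  · linarith [hflat x (hmem hx) z (hmem hz), hCr _ hrs]
  rcases eq_or_ne x z with rfl | hne
  · rw [sub_self]
    positivity
  have hmid : (1 / 2 : ℝ) • (x + z) ∈ ball z₀ r := by
    rw [smul_add]
    exact convex_ball z₀ r hx hz (by norm_num) (by norm_num) (by norm_num)
  have hc : ball ((1 / 2 : ℝ) • (x + z)) (2 * r) ⊆ Ω :=
    (ball_subset_ball' (by linarith [mem_ball.1 hmid])).trans hball
  linarith [hu.sub_le_lipschitz hε hα hβ hαβ hεr.le hN hδ hflat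
    ⟨norm_pos_iff.2 (sub_ne_zero.2 hne), hsr⟩ hc]

end IsDPPSolution

end Estimates

theorem improved_lipschitz_estimate_general {E : Type*} [NormedAddCommGroup E]
    [InnerProductSpace ℝ E] [FiniteDimensional ℝ E] [MeasurableSpace E] [BorelSpace E]
    [Nontrivial E] {α β r : ℝ} (hα : 0 < α) (hβ : 0 < β) (hαβ : α + β = 1) (hr : 0 < r) :
    ∃ C : ℝ, 0 < C ∧ ∀ Ω : Set E, Bornology.IsBounded Ω → ∀ ε : ℝ, 0 < ε →
      ∀ (ν : E) (b δ : ℝ), 0 < δ → ∀ u : E → ℝ, IsDPPSolution Ω ε α β u →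
      (∀ x ∈ outerStrip Ω ε, |u x - ⟪ν, x⟫ - b| ≤ δ) →
      ∀ z₀ : E, ball z₀ (3 * r) ⊆ Ω → ∀ x ∈ ball z₀ r, ∀ y ∈ ball z₀ r,
        |u x - u y| ≤ (‖ν‖ + C * δ) * dist x y + (2 * ‖ν‖ + C * δ) * ε := by
  have hC := two_div_le_lipschitzConst (E := E) (α := α) hβ.le hr.le
  have hr2 : 0 < 2 / r := by positivity
  refine ⟨2 * lipschitzConst E α β r + offsetConst α r,
    by linarith [offsetConst_nonneg hα.le hr.le], ?_⟩
  intro Ω hΩ ε hε ν b δ hδ u hu hplane z₀ hball x hx y hy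
  have hflat : ∀ a ∈ extendedDomain Ω ε, ∀ b ∈ extendedDomain Ω ε,
      u a - u b ≤ ‖ν‖ * ‖a - b‖ + 2 * δ := fun a ha b hb ↦
    hu.sub_le_norm_mul_norm_sub hα.le hβ hαβ hε hΩ hplane ha hb
  have hsub {x y : E} (hx : x ∈ ball z₀ r) (hy : y ∈ ball z₀ r) :=
    hu.sub_le_of_mem_ball hε hα hβ hαβ hr (norm_nonneg ν) hδ hflat hball hx hy
  refine abs_sub_le_iff.2 ⟨?_, ?_⟩
  · rw [dist_eq_norm]
    exact hsub hx hy
  · rw [dist_comm, dist_eq_norm]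
    exact hsub hy hx

/-- **Improved Lipschitz estimate near a plane (Theorem 4.2).** For every `p > 2`, integer
`n ≥ 2` and `r > 0` there exists `C > 0` depending only on `p, n, r` such that: for
`ε ∈ (0,1)` with `ε < r`, `F` continuous on `Γ_ε` with `|F(x) − ν·x − b| ≤ δ` there, and
`u` a bounded Borel function on `Ω_ε` satisfying the DPP on `Ω` with `u = F` on `Γ_ε`,
for every `z₀` with `B_{6r}(z₀) ⊆ Ω` and all `x, y ∈ B_r(z₀)`:
`|u(x) − u(y)| ≤ (|ν| + Cδ)|x − y| + (5|ν| + Cδ)ε`. -/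
theorem improved_lipschitz_estimate (n : ℕ) (hn : 2 ≤ n) (p r : ℝ)
    (hp : 2 < p) (hr : 0 < r) :
    ∃ C : ℝ, 0 < C ∧
      ∀ (Ω : Set (EuclideanSpace ℝ (Fin n))),
        IsOpen Ω → IsConnected Ω → Bornology.IsBounded Ω →
      ∀ ε : ℝ, ε ∈ Set.Ioo (0 : ℝ) 1 → ε < r →
      ∀ (ν : EuclideanSpace ℝ (Fin n)) (b δ : ℝ), 0 < δ →
      ∀ F u : EuclideanSpace ℝ (Fin n) → ℝ,
        ContinuousOn F {x | x ∉ Ω ∧ Metric.infDist x (frontier Ω) ≤ ε} →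
        (∀ x ∈ {x | x ∉ Ω ∧ Metric.infDist x (frontier Ω) ≤ ε}, |F x - ⟪ν, x⟫ - b| ≤ δ) →
        Measurable u →
        (∃ M, ∀ x ∈ Ω ∪ {x | x ∉ Ω ∧ Metric.infDist x (frontier Ω) ≤ ε}, |u x| ≤ M) →
        (∀ x ∈ {x | x ∉ Ω ∧ Metric.infDist x (frontier Ω) ≤ ε}, u x = F x) →
        (∀ x ∈ Ω, u x =
          ((p - 2) / (n + p)) / (2 * ε) *
              (∫ t in (0 : ℝ)..ε, (sSup (u '' Metric.ball x t) + sInf (u '' Metric.ball x t)))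
            + ((n + 2) / (n + p)) * ⨍ z in Metric.ball x ε, u z) →
      ∀ z₀ : EuclideanSpace ℝ (Fin n), Metric.ball z₀ (6 * r) ⊆ Ω →
      ∀ x ∈ Metric.ball z₀ r, ∀ y ∈ Metric.ball z₀ r,
        |u x - u y| ≤ (‖ν‖ + C * δ) * dist x y + (5 * ‖ν‖ + C * δ) * ε := by
  have : NeZero n := ⟨by omega⟩
  have hnp : (0 : ℝ) < n + p := by positivity
  have hα : 0 < (p - 2) / (n + p) := div_pos (sub_pos.2 hp) hnp
  have hβ : 0 < ((n : ℝ) + 2) / (n + p) := by positivity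
  have hαβ : (p - 2) / (n + p) + ((n : ℝ) + 2) / (n + p) = 1 := by
    rw [← add_div, div_eq_one_iff_eq hnp.ne']
    ring
  obtain ⟨C, hC, hlip⟩ := improved_lipschitz_estimate_general
    (E := EuclideanSpace ℝ (Fin n)) hα hβ hαβ hr
  refine ⟨C, hC, ?_⟩
  intro Ω _ _ hΩ ε hε _ ν b δ hδ F u _ hF hu_meas ⟨M, hM⟩ huF hu_dpp z₀ hz₀ x hx y hy
  have hu : IsDPPSolution Ω ε ((p - 2) / (n + p)) ((n + 2) / (n + p)) u :=
    ⟨hu_meas, isBounded_iff_forall_norm_le.2 ⟨M, forall_mem_image.2 hM⟩, hu_dpp⟩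
  have hball : ball z₀ (3 * r) ⊆ Ω := (ball_subset_ball (by linarith)).trans hz₀
  have hplane : ∀ w ∈ outerStrip Ω ε, |u w - ⟪ν, w⟫ - b| ≤ δ := fun w hw ↦ huF w hw ▸ hF w hw
  refine (hlip Ω hΩ ε hε.1 ν b δ hδ u hu hplane z₀ hball x hx y hy).trans ?_
  have := hε.1.le
  gcongr
  norm_num
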